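/- arXiv:2201.08464 — 8 statements merged into one kernel-verified Lean document; each statement's English description precedes it below -/
import Mathlib

section
/- Let q be a prime power, let S be a nonempty finite subset of ℕ^n with all coordinates of its elements at most q−2, let m > n, and let S' = {(s, 0, …, 0) ∈ ℕ^m : s ∈ S} be the natural embedding of S into ℕ^m. Then N_m(S') = (q−1)^{m−n}·N_n(S); equivalently, the relative minimum distance is unchanged: ((q−1)^m − N_m(S'))/(q−1)^m = ((q−1)^n − N_n(S))/(q−1)^n. -/
open MvPolynomial

/-- The set of zeros of a multivariate polynomial on the torus `((F_q)ˣ)^k`. -/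
def torusZeros {K : Type} [Field K] {k : ℕ} (f : MvPolynomial (Fin k) K) :
    Set (Fin k → K) :=
  {a | (∀ i, a i ≠ 0) ∧ MvPolynomial.eval a f = 0}

/-- `N(S)`: the maximum number of torus zeros of a nonzero polynomial whose
monomial support lies in `S`. -/
noncomputable def maxTorusZeros (K : Type) [Field K] {k : ℕ} (S : Set (Fin k →₀ ℕ)) : ℕ :=
  sSup {z | ∃ f : MvPolynomial (Fin k) K, f ≠ 0 ∧
    (↑f.support : Set (Fin k →₀ ℕ)) ⊆ S ∧ z = (torusZeros f).ncard}

lemma aux_ncard_torus (K : Type) [Field K] [Fintype K] (d : ℕ) :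
    ({b : Fin d → K | ∀ i, b i ≠ 0}).ncard = (Fintype.card K - 1) ^ d := by
  classical
  have h : {b : Fin d → K | ∀ i, b i ≠ 0}
      = (fun (u : Fin d → Kˣ) => fun i => (u i : K)) '' Set.univ := by
    ext b
    constructor
    · intro hb
      exact ⟨fun i => Units.mk0 (b i) (hb i), trivial, by ext i; simp⟩
    · rintro ⟨u, -, rfl⟩ i
      exact (u i).ne_zero
  rw [h, Set.ncard_image_of_injective, Set.ncard_univ, Nat.card_eq_fintype_card]
  · simp [Fintype.card_units]
  · intro u v huv
    ext i
    exact congrFun huv i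

lemma aux_ncard_rename (K : Type) [Field K] [Fintype K] (n d : ℕ)
    (f : MvPolynomial (Fin n) K) :
    (torusZeros (rename (Fin.castAdd d) f)).ncard
      = (Fintype.card K - 1) ^ d * (torusZeros f).ncard := by
  have h : torusZeros (rename (Fin.castAdd d) f)
      = (Fin.appendEquiv n d) '' (torusZeros f ×ˢ {b : Fin d → K | ∀ i, b i ≠ 0}) := by
    ext a
    constructor
    · rintro ⟨h1, h2⟩
      refine ⟨(fun i => a (Fin.castAdd d i), fun i => a (Fin.natAdd n i)),
        ⟨⟨fun i => h1 _, ?_⟩, fun i => h1 _⟩, ?_⟩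
      · rw [eval_rename] at h2
        exact h2
      · exact Fin.append_castAdd_natAdd
    · rintro ⟨⟨b, c⟩, ⟨⟨h1, h2⟩, h3⟩, rfl⟩
      constructor
      · intro i
        refine Fin.addCases (fun j => ?_) (fun j => ?_) i
        · simpa [Fin.appendEquiv] using h1 j
        · simpa [Fin.appendEquiv] using h3 j
      · rw [eval_rename]
        have : (Fin.appendEquiv n d (b, c)) ∘ Fin.castAdd d = b := by
          ext i; simp [Fin.appendEquiv]
        rw [this]; exact h2
  rw [h, Set.ncard_image_of_injective _ (Fin.appendEquiv n d).injective, Set.ncard_prod,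
    aux_ncard_torus, mul_comm]

lemma aux_main (K : Type) [Field K] [Fintype K] (n d : ℕ)
    (S : Set (Fin n →₀ ℕ)) (hSne : S.Nonempty) :
    maxTorusZeros K (Finsupp.mapDomain (Fin.castAdd d) '' S)
      = (Fintype.card K - 1) ^ d * maxTorusZeros K S := by
  classical
  have hinj : Function.Injective (Fin.castAdd d : Fin n → Fin (n + d)) :=
    Fin.castAdd_injective n d
  unfold maxTorusZeros
  set A := {z | ∃ f : MvPolynomial (Fin n) K, f ≠ 0 ∧
    (↑f.support : Set (Fin n →₀ ℕ)) ⊆ S ∧ z = (torusZeros f).ncard} with hA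
  have hB : {z | ∃ f : MvPolynomial (Fin (n + d)) K, f ≠ 0 ∧
      (↑f.support : Set (Fin (n + d) →₀ ℕ)) ⊆ Finsupp.mapDomain (Fin.castAdd d) '' S ∧
      z = (torusZeros f).ncard} = (fun z => (Fintype.card K - 1) ^ d * z) '' A := by
    ext z
    constructor
    · rintro ⟨g, hg0, hgS, rfl⟩
      have hg : g ∈ Set.range (rename (Fin.castAdd d) : MvPolynomial (Fin n) K → _) := by
        have : g ∈ (rename (Fin.castAdd d) : MvPolynomial (Fin n) K →ₐ[K] _).range := by
          rw [g.as_sum]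
          refine Subalgebra.sum_mem _ fun s hs => ?_
          obtain ⟨t, -, rfl⟩ := hgS hs
          exact ⟨monomial t (coeff (Finsupp.mapDomain (Fin.castAdd d) t) g),
            rename_monomial _ _ _⟩
        exact this
      obtain ⟨f, rfl⟩ := hg
      refine ⟨_, ⟨f, ?_, ?_, rfl⟩, (aux_ncard_rename K n d f).symm⟩
      · rintro rfl
        simp at hg0
      · intro s hs
        have : Finsupp.mapDomain (Fin.castAdd d) s ∈ (rename (Fin.castAdd d) f).support := by
          rw [mem_support_iff, coeff_rename_mapDomain _ hinj]
          exact mem_support_iff.1 hs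
        obtain ⟨t, ht, hts⟩ := hgS this
        rwa [← Finsupp.mapDomain_injective hinj hts]
    · rintro ⟨_, ⟨f, hf0, hfS, rfl⟩, rfl⟩
      refine ⟨rename (Fin.castAdd d) f, ?_, ?_, (aux_ncard_rename K n d f).symm⟩
      · intro h
        exact hf0 (rename_injective _ hinj (by simpa using h))
      · rw [support_rename_of_injective hinj, Finset.coe_image]
        exact Set.image_mono hfS
  rw [hB]
  have hAne : A.Nonempty := by
    obtain ⟨s, hs⟩ := hSne
    refine ⟨_, monomial s 1, by simp, ?_, rfl⟩
    intro t ht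
    have := support_monomial_subset ht
    simp at this
    exact this ▸ hs
  have hAbdd : BddAbove A := by
    refine ⟨Nat.card (Fin n → K), ?_⟩
    rintro _ ⟨f, -, -, rfl⟩
    exact Set.ncard_le_card _
  have hmem := Nat.sSup_mem hAne hAbdd
  have hg : IsGreatest ((fun z => (Fintype.card K - 1) ^ d * z) '' A)
      ((Fintype.card K - 1) ^ d * sSup A) := by
    refine ⟨⟨_, hmem, rfl⟩, ?_⟩
    rintro _ ⟨z, hz, rfl⟩
    exact Nat.mul_le_mul_left _ (le_csSup hAbdd hz)
  exact hg.csSup_eq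

/-- Embedding a nonempty exponent set `S ⊆ ℕ^n` (coordinates at most `q-2`) into
`ℕ^m` for `m > n` multiplies `N` by `(q-1)^(m-n)` and leaves the relative minimum
distance unchanged. -/
theorem stmt1 (K : Type) [Field K] [Fintype K] (q : ℕ) (hq : Fintype.card K = q)
    (n m : ℕ) (hnm : n < m)
    (S : Set (Fin n →₀ ℕ)) (hSne : S.Nonempty) (hSfin : S.Finite)
    (hbound : ∀ s ∈ S, ∀ i, s i ≤ q - 2) :
    maxTorusZeros K (Finsupp.mapDomain (Fin.castLE hnm.le) '' S)
      = (q - 1) ^ (m - n) * maxTorusZeros K S ∧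
    (((q : ℝ) - 1) ^ m
        - (maxTorusZeros K (Finsupp.mapDomain (Fin.castLE hnm.le) '' S) : ℝ))
        / ((q : ℝ) - 1) ^ m
      = (((q : ℝ) - 1) ^ n - (maxTorusZeros K S : ℝ)) / ((q : ℝ) - 1) ^ n := by
  obtain ⟨d, rfl⟩ := Nat.exists_eq_add_of_lt hnm
  have h1 := aux_main K n (d + 1) S hSne
  rw [hq] at h1
  have h2 : maxTorusZeros K (Finsupp.mapDomain (Fin.castLE hnm.le) '' S)
      = (q - 1) ^ (n + d + 1 - n) * maxTorusZeros K S := by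
    rw [show n + d + 1 - n = d + 1 by omega]
    exact h1
  refine ⟨h2, ?_⟩
  have hq2 : 1 < q := hq ▸ Fintype.one_lt_card
  have hpos : ((q : ℝ) - 1) ≠ 0 := by
    have : (1 : ℝ) < q := by exact_mod_cast hq2
    linarith
  rw [h2, show n + d + 1 - n = d + 1 by omega, show n + d + 1 = n + (d + 1) by omega]
  push_cast [Nat.cast_sub hq2.le]
  rw [pow_add, div_eq_div_iff (by positivity) (by positivity)]
  ring
end

section
/- Let q be a prime power and let S ⊆ ℕ^n and T ⊆ ℕ^m be nonempty finite exponent sets with all coordinates at most q−2 (the lattice point sets of integral convex polytopes P ⊆ [0,q−2]^n and Q ⊆ [0,q−2]^m). The lattice point set of the join P*Q is S' = {(s,0,0) : s ∈ S} ∪ {(0,t,1) : t ∈ T} ⊆ ℕ^{n+m+1}, so every nonzero element of 𝓛_{S'} has the form h = f + z·g with f ∈ 𝓛_S ∪ {0}, g ∈ 𝓛_T ∪ {0}, not both zero. Then N(S') = max{ (q−1)^{n+m}, N(S)(q−1)^{m+1}, N(T)(q−1)^{n+1}, (q−1)N(S)N(T) + ((q−1)^n − N(S))((q−1)^m − N(T))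 }. -/
open MvPolynomial

/-- The exponent set of the join: `S' = {(s,0,0) : s ∈ S} ∪ {(0,t,1) : t ∈ T}`. -/
noncomputable def joinExps {n m : ℕ} (S : Set (Fin n →₀ ℕ)) (T : Set (Fin m →₀ ℕ)) :
    Set (Fin (n + m + 1) →₀ ℕ) :=
  (fun s => Finsupp.mapDomain (Fin.castLE (by omega : n ≤ n + m + 1)) s) '' S ∪
    (fun t => Finsupp.mapDomain
        (fun j : Fin m => (⟨n + (j : ℕ), by have := j.isLt; omega⟩ : Fin (n + m + 1))) t
      + Finsupp.single (Fin.last (n + m)) 1) '' T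

namespace JoinProof

open Finset

variable {K : Type} [Field K]

/-- Evaluation at a torus point. -/
noncomputable def ev {k : ℕ} (f : MvPolynomial (Fin k) K) (u : Fin k → Kˣ) : K :=
  MvPolynomial.eval (fun i => (u i : K)) f

/-- Number of torus zeros, as a finset cardinality. -/
noncomputable def cnt [Fintype K] {k : ℕ} (f : MvPolynomial (Fin k) K) : ℕ := by
  classical exact (univ.filter (fun u : Fin k → Kˣ => ev f u = 0)).card

theorem ncard_eq [Fintype K] {k : ℕ} (f : MvPolynomial (Fin k) K) :
    (torusZeros f).ncard = cnt f := by
  classical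
  have : torusZeros f = (fun (u : Fin k → Kˣ) (i : Fin k) => (u i : K)) ''
      ((univ.filter (fun u : Fin k → Kˣ => ev f u = 0) : Finset _) : Set (Fin k → Kˣ)) := by
    ext a
    constructor
    · rintro ⟨h0, h⟩
      exact ⟨fun i => Units.mk0 (a i) (h0 i),
        Finset.mem_coe.2 (Finset.mem_filter.2 ⟨Finset.mem_univ _, h⟩), rfl⟩
    · rintro ⟨u, hu, rfl⟩
      exact ⟨fun i => (u i).ne_zero, (Finset.mem_filter.1 (Finset.mem_coe.1 hu)).2⟩
  rw [this, Set.ncard_image_of_injective, Set.ncard_coe_finset, cnt]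
  intro u v h
  ext i
  exact congrFun h i

theorem cnt_le [Fintype K] {k : ℕ} (f : MvPolynomial (Fin k) K) :
    cnt f ≤ (Fintype.card K - 1) ^ k := by
  classical
  rw [cnt]
  refine (Finset.card_le_univ _).trans ?_
  simp [Fintype.card_units]

theorem cnt_zero [Fintype K] {k : ℕ} :
    cnt (0 : MvPolynomial (Fin k) K) = (Fintype.card K - 1) ^ k := by
  classical
  simp [cnt, ev, Fintype.card_units]

theorem cnt_monomial [Fintype K] {k : ℕ} (s : Fin k →₀ ℕ) :
    cnt (monomial s (1 : K)) = 0 := by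
  classical
  rw [cnt, Finset.card_eq_zero, Finset.filter_eq_empty_iff]
  intro u _
  simp [ev, eval_monomial, Finsupp.prod, Finset.prod_eq_zero_iff]

/-- First block of coordinates. -/
def iA (n m : ℕ) : Fin n → Fin (n + m + 1) := Fin.castLE (by omega : n ≤ n + m + 1)

/-- Second block of coordinates. -/
def iB (n m : ℕ) : Fin m → Fin (n + m + 1) :=
  fun j : Fin m => (⟨n + (j : ℕ), by have := j.isLt; omega⟩ : Fin (n + m + 1))

/-- The polynomial `f + z g`. -/
noncomputable def J {n m : ℕ} (f : MvPolynomial (Fin n) K) (g : MvPolynomial (Fin m) K) :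
    MvPolynomial (Fin (n + m + 1)) K :=
  rename (iA n m) f + rename (iB n m) g * X (Fin.last (n + m))

theorem J_inj {n m : ℕ} (f : MvPolynomial (Fin n) K) (g : MvPolynomial (Fin m) K)
    (h : J f g = 0) : f = 0 ∧ g = 0 := by
  have hf : f = 0 := by
    have := congrArg (aeval (fun k : Fin (n + m + 1) =>
      if h : (k : ℕ) < n then (X ⟨k, h⟩ : MvPolynomial (Fin n) K) else 0)) h
    simp only [J, map_add, map_mul, aeval_X, aeval_rename, map_zero] at this
    simp only [Fin.val_last, show ¬ (n + m < n) by omega, dite_false, mul_zero, add_zero] at this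
    have e : ((fun k : Fin (n + m + 1) =>
      if h : (k : ℕ) < n then (X ⟨k, h⟩ : MvPolynomial (Fin n) K) else 0) ∘ iA n m) = X := by
      ext1 i
      simp [iA]
    rw [e, aeval_X_left_apply] at this
    exact this
  refine ⟨hf, ?_⟩
  subst hf
  simp only [J, map_zero, zero_add, mul_eq_zero, X_ne_zero, or_false] at h
  refine rename_injective (iB n m) ?_ (h.trans (map_zero _).symm)
  intro a b hab
  simp only [iB, Fin.mk.injEq] at hab
  ext; omega

theorem J_support {n m : ℕ} {S : Set (Fin n →₀ ℕ)} {T : Set (Fin m →₀ ℕ)}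
    (f : MvPolynomial (Fin n) K) (g : MvPolynomial (Fin m) K)
    (hf : (↑f.support : Set _) ⊆ S) (hg : (↑g.support : Set _) ⊆ T) :
    (↑(J f g).support : Set _) ⊆ joinExps S T := by
  classical
  intro v hv
  rcases Finset.mem_union.1 (support_add hv) with h | h
  · left
    obtain ⟨s, rfl, hs⟩ := coeff_rename_ne_zero _ _ _ (mem_support_iff.1 h)
    exact ⟨s, hf (mem_support_iff.2 hs), rfl⟩
  · right
    rw [support_mul_X, Finset.mem_map] at h
    obtain ⟨w, hw, rfl⟩ := h
    obtain ⟨t, rfl, ht⟩ := coeff_rename_ne_zero _ _ _ (mem_support_iff.1 hw)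
    exact ⟨t, hg (mem_support_iff.2 ht), rfl⟩

theorem J_add {n m : ℕ} (f f' : MvPolynomial (Fin n) K) (g g' : MvPolynomial (Fin m) K) :
    J (f + f') (g + g') = J f g + J f' g' := by
  simp only [J, map_add]; ring

theorem J_surj {n m : ℕ} {S : Set (Fin n →₀ ℕ)} {T : Set (Fin m →₀ ℕ)}
    (h : MvPolynomial (Fin (n + m + 1)) K) (hh : (↑h.support : Set _) ⊆ joinExps S T) :
    ∃ f : MvPolynomial (Fin n) K, ∃ g : MvPolynomial (Fin m) K,
      (↑f.support : Set _) ⊆ S ∧ (↑g.support : Set _) ⊆ T ∧ h = J f g := by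
  classical
  rw [h.as_sum]
  refine Finset.sum_induction _ (fun h => ∃ f : MvPolynomial (Fin n) K,
    ∃ g : MvPolynomial (Fin m) K,
      (↑f.support : Set _) ⊆ S ∧ (↑g.support : Set _) ⊆ T ∧ h = J f g) ?_ ?_ ?_
  · rintro _ _ ⟨f, g, hf, hg, rfl⟩ ⟨f', g', hf', hg', rfl⟩
    refine ⟨f + f', g + g', ?_, ?_, (J_add ..).symm⟩
    · intro v hv
      exact (Finset.mem_union.1 (support_add hv)).elim (fun x => hf x) (fun x => hf' x)
    · intro v hv
      exact (Finset.mem_union.1 (support_add hv)).elim (fun x => hg x) (fun x => hg' x)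
  · exact ⟨0, 0, by simp, by simp, by simp [J]⟩
  · intro v hv
    rcases hh hv with ⟨s, hs, e⟩ | ⟨t, ht, e⟩
    · refine ⟨monomial s (coeff v h), 0, ?_, by simp, ?_⟩
      · intro w hw
        have := support_monomial_subset hw
        rw [Finset.mem_singleton] at this
        rwa [this]
      · simp only [J, map_zero, zero_mul, add_zero, rename_monomial]
        exact congrArg (fun w => monomial w (coeff v h)) e.symm
    · refine ⟨0, monomial t (coeff v h), by simp, ?_, ?_⟩
      · intro w hw
        have := support_monomial_subset hw
        rw [Finset.mem_singleton] at this
        rwa [this]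
      · simp only [J, map_zero, zero_add, rename_monomial, X, monomial_mul, mul_one]
        exact congrArg (fun w => monomial w (coeff v h)) e.symm

/-- Splitting of the torus. -/
def E (K : Type) [Field K] (n m : ℕ) :
    (((Fin n → Kˣ) × (Fin m → Kˣ)) × Kˣ) ≃ (Fin (n + m + 1) → Kˣ) where
  toFun p := Fin.snoc (α := fun _ => Kˣ) (Fin.append p.1.1 p.1.2) p.2
  invFun u := ((fun i => u (iA n m i), fun j => u (iB n m j)), u (Fin.last (n + m)))
  left_inv := by
    rintro ⟨⟨x, y⟩, z⟩
    have hA : ∀ i, iA n m i = Fin.castSucc (Fin.castAdd m i) := fun i => rfl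
    have hB : ∀ i, iB n m i = Fin.castSucc (Fin.natAdd n i) := fun i => rfl
    simp only [hA, hB, Fin.snoc_castSucc, Fin.append_left, Fin.append_right, Fin.snoc_last]
  right_inv := by
    intro u
    have hA : ∀ i, iA n m i = Fin.castSucc (Fin.castAdd m i) := fun i => rfl
    have hB : ∀ i, iB n m i = Fin.castSucc (Fin.natAdd n i) := fun i => rfl
    ext k
    refine Fin.lastCases ?_ (fun k => ?_) k
    · simp
    · refine Fin.addCases (fun i => ?_) (fun j => ?_) k <;>
        simp only [hA, hB, Fin.snoc_castSucc, Fin.append_left, Fin.append_right]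

theorem ev_J {n m : ℕ} (f : MvPolynomial (Fin n) K) (g : MvPolynomial (Fin m) K)
    (x : Fin n → Kˣ) (y : Fin m → Kˣ) (z : Kˣ) :
    ev (J f g) (E K n m ((x, y), z)) = ev f x + ev g y * z := by
  have hh := (E K n m).left_inv ((x, y), z)
  simp only [E, Prod.mk.injEq] at hh
  obtain ⟨⟨h1, h2⟩, h3⟩ := hh
  simp only [ev, J, map_add, map_mul, eval_rename, eval_X, E, Equiv.coe_fn_mk]
  congr 1
  · congr 2
    ext i
    exact congrArg Units.val (congrFun h1 i)
  · congr 1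
    · congr 2
      ext i
      exact congrArg Units.val (congrFun h2 i)
    · exact congrArg Units.val h3

theorem fiber [Fintype K] [DecidableEq K] (a b : K) :
    (∑ z : Kˣ, if a + b * z = 0 then 1 else 0) =
      (Fintype.card K - 1) * ((if a = 0 then 1 else 0) * (if b = 0 then 1 else 0))
        + (if a ≠ 0 then 1 else 0) * (if b ≠ 0 then 1 else 0) := by
  by_cases ha : a = 0 <;> by_cases hb : b = 0
  · simp [ha, hb, Fintype.card_units]
  · simp [ha, hb]
  · simp [ha, hb]
  · simp only [ha, hb, if_false, ne_eq, not_false_eq_true, if_true]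
    rw [Finset.sum_eq_single (Units.mk0 (-a / b) (by simp [ha, hb]))]
    · have : a + b * (-a / b) = 0 := by field_simp; ring
      simp [this]
    · intro z _ hz
      rw [if_neg]
      intro h
      apply hz
      ext
      simp only [Units.val_mk0]
      field_simp
      linear_combination h
    · simp

theorem cnt_J [Fintype K] {n m : ℕ} (f : MvPolynomial (Fin n) K) (g : MvPolynomial (Fin m) K) :
    cnt (J f g) = (Fintype.card K - 1) * cnt f * cnt g +
      ((Fintype.card K - 1) ^ n - cnt f) * ((Fintype.card K - 1) ^ m - cnt g) := by
  classical
  have key : ∀ {k : ℕ} (f : MvPolynomial (Fin k) K),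
      (Fintype.card K - 1) ^ k - cnt f = ∑ u : Fin k → Kˣ, if ev f u ≠ 0 then 1 else 0 := by
    intro k f
    have h := Finset.card_filter_add_card_filter_not (s := (univ : Finset (Fin k → Kˣ)))
      (fun u => ev f u = 0)
    simp only [Finset.card_univ, Fintype.card_fun, Fintype.card_units, Fintype.card_fin] at h
    rw [← Finset.card_filter, cnt, ← h]
    simp
  rw [key, key]
  have c : ∀ {k : ℕ} (f : MvPolynomial (Fin k) K),
      cnt f = ∑ u : Fin k → Kˣ, if ev f u = 0 then 1 else 0 := by
    intro k f
    rw [cnt, Finset.card_filter]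
  rw [c, ← (E K n m).sum_comp, Fintype.sum_prod_type, Fintype.sum_prod_type]
  simp only [ev_J, fiber, Finset.sum_add_distrib, ← Finset.mul_sum, ← Finset.sum_mul]
  rw [c f, c g, mul_assoc]

/-- Characterization of `maxTorusZeros`. -/
theorem le_max [Fintype K] {k : ℕ} {S : Set (Fin k →₀ ℕ)} (f : MvPolynomial (Fin k) K)
    (h0 : f ≠ 0) (hf : (↑f.support : Set _) ⊆ S) : cnt f ≤ maxTorusZeros K S := by
  refine le_csSup ⟨(Fintype.card K - 1) ^ k, ?_⟩ ⟨f, h0, hf, (ncard_eq f).symm⟩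
  rintro _ ⟨f, _, _, rfl⟩
  rw [ncard_eq]
  exact cnt_le f

theorem mono_mem {k : ℕ} {S : Set (Fin k →₀ ℕ)} {s} (hs : s ∈ S) :
    (↑(monomial s (1 : K)).support : Set _) ⊆ S := by
  intro w hw
  have := support_monomial_subset hw
  rw [Finset.mem_singleton] at this
  rwa [this]

theorem exists_max [Fintype K] {k : ℕ} {S : Set (Fin k →₀ ℕ)} (hS : S.Nonempty) :
    ∃ f : MvPolynomial (Fin k) K, f ≠ 0 ∧ (↑f.support : Set _) ⊆ S ∧
      cnt f = maxTorusZeros K S := by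
  have := Nat.sSup_mem (s := {z | ∃ f : MvPolynomial (Fin k) K, f ≠ 0 ∧
    (↑f.support : Set (Fin k →₀ ℕ)) ⊆ S ∧ z = (torusZeros f).ncard}) ?_ ?_
  · obtain ⟨f, h0, hf, e⟩ := this
    exact ⟨f, h0, hf, by rw [← ncard_eq, ← e]; rfl⟩
  · obtain ⟨s, hs⟩ := hS
    exact ⟨_, monomial s 1, by simp, mono_mem hs, rfl⟩
  · refine ⟨(Fintype.card K - 1) ^ k, ?_⟩
    rintro _ ⟨f, _, _, rfl⟩
    rw [ncard_eq]
    exact cnt_le f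

/-- A bilinear function on a box is maximal at a vertex. -/
theorem bilin (r A B M N a b : ℕ) (hM : M ≤ A) (hN : N ≤ B) (ha : a ≤ M) (hb : b ≤ N) :
    r * a * b + (A - a) * (B - b) ≤ max (A * B) (r * M * N + (A - M) * (B - N)) := by
  obtain ⟨C, rfl⟩ := Nat.exists_eq_add_of_le hM
  obtain ⟨D, rfl⟩ := Nat.exists_eq_add_of_le hN
  obtain ⟨c, rfl⟩ := Nat.exists_eq_add_of_le ha
  obtain ⟨d, rfl⟩ := Nat.exists_eq_add_of_le hb
  have e1 : a + c + C - a = c + C := by omega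
  have e2 : b + d + D - b = d + D := by omega
  have e3 : a + c + C - (a + c) = C := by omega
  have e4 : b + d + D - (b + d) = D := by omega
  rw [e1, e2, e3, e4, le_max_iff]
  by_contra! h
  obtain ⟨h1, h2⟩ := h
  -- from the first: the slope in the direction of `a` at `b` is positive
  have q1 : d + D < r * b := by
    by_contra! hq
    nlinarith [Nat.mul_le_mul_left a hq, Nat.zero_le ((c + C) * b), Nat.zero_le (a * b)]
  have q2 : r * a * b + (c + C) * (d + D) ≤ r * (a + c) * b + C * (d + D) := by
    nlinarith [Nat.mul_le_mul_left c q1.le]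
  have q3 : r * (a + c) * (b + d) + C * D < r * (a + c) * b + C * (d + D) := by omega
  have q4 : r * (a + c) < C := by
    by_contra! hq
    nlinarith [Nat.mul_le_mul_left d hq]
  nlinarith [Nat.mul_le_mul_right b q4.le, Nat.zero_le ((a + c) * (b + d + D))]

end JoinProof

/-- For exponent sets `S`, `T` of polytopes `P`, `Q`, the maximal number of torus zeros
for the join satisfies
`N(S') = max{(q-1)^(n+m), N(S)(q-1)^(m+1), N(T)(q-1)^(n+1),
  (q-1)N(S)N(T) + ((q-1)^n - N(S))((q-1)^m - N(T))}`. -/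
theorem stmt5 (K : Type) [Field K] [Fintype K] (q : ℕ) (hq : Fintype.card K = q)
    (n m : ℕ) (S : Set (Fin n →₀ ℕ)) (T : Set (Fin m →₀ ℕ))
    (hSne : S.Nonempty) (hTne : T.Nonempty) (hSfin : S.Finite) (hTfin : T.Finite)
    (hSbound : ∀ s ∈ S, ∀ i, s i ≤ q - 2) (hTbound : ∀ t ∈ T, ∀ i, t i ≤ q - 2) :
    maxTorusZeros K (joinExps S T)
      = max (max ((q - 1) ^ (n + m)) (maxTorusZeros K S * (q - 1) ^ (m + 1)))
          (max (maxTorusZeros K T * (q - 1) ^ (n + 1))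
            ((q - 1) * maxTorusZeros K S * maxTorusZeros K T
              + ((q - 1) ^ n - maxTorusZeros K S) * ((q - 1) ^ m - maxTorusZeros K T))) := by
  subst hq
  obtain ⟨f, hf0, hf, ef⟩ := JoinProof.exists_max (K := K) hSne
  obtain ⟨g, hg0, hg, eg⟩ := JoinProof.exists_max (K := K) hTne
  have hM : maxTorusZeros K S ≤ (Fintype.card K - 1) ^ n := ef ▸ JoinProof.cnt_le f
  have hN : maxTorusZeros K T ≤ (Fintype.card K - 1) ^ m := eg ▸ JoinProof.cnt_le g
  have hJne : (joinExps S T).Nonempty := by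
    obtain ⟨s, hs⟩ := hSne
    exact ⟨_, Or.inl ⟨s, hs, rfl⟩⟩
  apply le_antisymm
  · obtain ⟨h, hh0, hh, eh⟩ := JoinProof.exists_max (K := K) hJne
    rw [← eh]
    obtain ⟨a, b, ha, hb, rfl⟩ := JoinProof.J_surj h hh
    rw [JoinProof.cnt_J]
    by_cases ha0 : a = 0
    · subst ha0
      have hb0 : b ≠ 0 := by
        rintro rfl
        exact hh0 (by simp [JoinProof.J])
      have := JoinProof.le_max b hb0 hb
      rw [JoinProof.cnt_zero, Nat.sub_self, zero_mul, add_zero]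
      refine le_trans ?_ (le_max_right _ _)
      refine le_trans ?_ (le_max_left _ _)
      calc _ = JoinProof.cnt b * (Fintype.card K - 1) ^ (n + 1) := by ring
        _ ≤ _ := Nat.mul_le_mul_right _ this
    by_cases hb0 : b = 0
    · subst hb0
      have := JoinProof.le_max a ha0 ha
      rw [JoinProof.cnt_zero, Nat.sub_self, mul_zero, add_zero]
      refine le_trans ?_ (le_max_left _ _)
      refine le_trans ?_ (le_max_right _ _)
      calc _ = JoinProof.cnt a * (Fintype.card K - 1) ^ (m + 1) := by ring
        _ ≤ _ := Nat.mul_le_mul_right _ this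
    refine (JoinProof.bilin _ _ _ _ _ _ _ hM hN (JoinProof.le_max a ha0 ha)
      (JoinProof.le_max b hb0 hb)).trans ?_
    rw [← pow_add]
    exact max_le_max (le_max_left _ _) (le_max_right _ _)
  · have L : ∀ (a : MvPolynomial (Fin n) K) (b : MvPolynomial (Fin m) K),
        (↑a.support : Set _) ⊆ S → (↑b.support : Set _) ⊆ T → (a ≠ 0 ∨ b ≠ 0) →
        (Fintype.card K - 1) * JoinProof.cnt a * JoinProof.cnt b +
          ((Fintype.card K - 1) ^ n - JoinProof.cnt a) *
            ((Fintype.card K - 1) ^ m - JoinProof.cnt b) ≤ maxTorusZeros K (joinExps S T) := by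
      intro a b ha hb hab
      rw [← JoinProof.cnt_J]
      refine JoinProof.le_max _ (fun h => ?_) (JoinProof.J_support a b ha hb)
      obtain ⟨h1, h2⟩ := JoinProof.J_inj a b h
      tauto
    refine max_le (max_le ?_ ?_) (max_le ?_ ?_)
    · obtain ⟨s, hs⟩ := hSne
      obtain ⟨t, ht⟩ := hTne
      have := L (monomial s 1) (monomial t 1) (JoinProof.mono_mem hs) (JoinProof.mono_mem ht)
        (Or.inl (by simp))
      simpa [JoinProof.cnt_monomial, pow_add] using this
    · have := L f 0 hf (by simp) (Or.inl hf0)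
      rw [JoinProof.cnt_zero, Nat.sub_self, mul_zero, add_zero, ef] at this
      refine le_trans (le_of_eq ?_) this
      ring
    · have := L 0 g (by simp) hg (Or.inr hg0)
      rw [JoinProof.cnt_zero, Nat.sub_self, zero_mul, add_zero, eg] at this
      refine le_trans (le_of_eq ?_) this
      ring
    · have := L f g hf hg (Or.inl hf0)
      rwa [ef, eg] at this
end

section
/- Let q be a prime power and let P ⊆ [0,q−2]^n and Q ⊆ [0,q−2]^m be integral convex polytopes with N(P) ≥ 2(q−1)^n/q and N(Q) ≥ 2(q−1)^m/q. Then the relative minimum distance of the toric code of the join satisfies δ(P*Q) = min{ δ(P), δ(Q), δ(P) + δ(Q) − δ(P)·δ(Q)·q/(q−1) }. -/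
open MvPolynomial

/-- An integral convex polytope: the convex hull of a nonempty finite set of
integer lattice points. -/
def IsIntegralPolytope {n : ℕ} (P : Set (Fin n → ℝ)) : Prop :=
  ∃ V : Finset (Fin n → ℤ), V.Nonempty ∧
    P = convexHull ℝ ((fun (v : Fin n → ℤ) (i : Fin n) => (v i : ℝ)) '' ↑V)

/-- `P ⊆ [0, q-2]^n`. -/
def InBox (q : ℕ) {n : ℕ} (P : Set (Fin n → ℝ)) : Prop :=
  ∀ x ∈ P, ∀ i, 0 ≤ x i ∧ x i ≤ (q : ℝ) - 2

/-- Lattice points of `P` regarded as exponent vectors. -/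
def latticeExps {n : ℕ} (P : Set (Fin n → ℝ)) : Set (Fin n →₀ ℕ) :=
  {d | (fun i => ((d i : ℕ) : ℝ)) ∈ P}

/-- `N(P)`: the maximal number of torus zeros of a nonzero polynomial supported
on the lattice points of `P`. -/
noncomputable def NP (K : Type) [Field K] {n : ℕ} (P : Set (Fin n → ℝ)) : ℕ :=
  maxTorusZeros K (latticeExps P)

/-- The relative minimum distance `δ(P) = ((q-1)^n - N(P))/(q-1)^n` of the toric code
of `P` over the field `K` with `q` elements. -/
noncomputable def deltaP (K : Type) [Field K] [Fintype K] {n : ℕ}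
    (P : Set (Fin n → ℝ)) : ℝ :=
  (((Fintype.card K : ℝ) - 1) ^ n - (NP K P : ℝ)) / ((Fintype.card K : ℝ) - 1) ^ n

/-- `(p, 0^m, 0)` : the embedding of `ℝ^n` into `ℝ^(n+m+1)` used for the join. -/
def joinEmb₁ (n m : ℕ) (x : Fin n → ℝ) : Fin (n + m + 1) → ℝ :=
  fun k => if h : (k : ℕ) < n then x ⟨k, h⟩ else 0

/-- `(0^n, q, 1)` : the embedding of `ℝ^m` into `ℝ^(n+m+1)` used for the join. -/
def joinEmb₂ (n m : ℕ) (y : Fin m → ℝ) : Fin (n + m + 1) → ℝ :=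
  fun k => if h0 : (k : ℕ) < n then 0
    else if h : (k : ℕ) < n + m then y ⟨(k : ℕ) - n, by omega⟩ else 1

/-- The join `P * Q = conv({(p,0,0) : p ∈ P} ∪ {(0,q,1) : q ∈ Q})`. -/
def joinPolytope {n m : ℕ} (P : Set (Fin n → ℝ)) (Q : Set (Fin m → ℝ)) :
    Set (Fin (n + m + 1) → ℝ) :=
  convexHull ℝ (joinEmb₁ n m '' P ∪ joinEmb₂ n m '' Q)

/-- first index embedding -/
def ix1 (n m : ℕ) (i : Fin n) : Fin (n + m + 1) := Fin.castSucc (Fin.castAdd m i)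

/-- second index embedding -/
def ix2 (n m : ℕ) (j : Fin m) : Fin (n + m + 1) := Fin.castSucc (Fin.natAdd n j)

theorem ix1_inj (n m : ℕ) : Function.Injective (ix1 n m) := by
  intro a b h
  simpa [ix1, Fin.ext_iff] using h

theorem ix2_inj (n m : ℕ) : Function.Injective (ix2 n m) := by
  intro a b h
  simpa [ix2, Fin.ext_iff] using h

theorem ix_cases {n m : ℕ} {p : Fin (n + m + 1) → Prop} (h1 : ∀ i, p (ix1 n m i))
    (h2 : ∀ j, p (ix2 n m j)) (h3 : p (Fin.last _)) : ∀ k, p k := by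
  intro k
  refine Fin.lastCases h3 (fun i => ?_) k
  exact Fin.addCases (fun i => h1 i) (fun j => h2 j) i

theorem emb1_ix1 {n m : ℕ} (x : Fin n → ℝ) (i) : joinEmb₁ n m x (ix1 n m i) = x i := by
  simp [joinEmb₁, ix1]
theorem emb1_ix2 {n m : ℕ} (x : Fin n → ℝ) (i) : joinEmb₁ n m x (ix2 n m i) = 0 := by
  simp [joinEmb₁, ix2]
theorem emb1_last {n m : ℕ} (x : Fin n → ℝ) : joinEmb₁ n m x (Fin.last _) = 0 := by
  simp [joinEmb₁]
theorem emb2_ix1 {n m : ℕ} (x : Fin m → ℝ) (i) : joinEmb₂ n m x (ix1 n m i) = 0 := by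
  simp [joinEmb₂, ix1]
theorem emb2_ix2 {n m : ℕ} (x : Fin m → ℝ) (i) : joinEmb₂ n m x (ix2 n m i) = x i := by
  simp [joinEmb₂, ix2]
theorem emb2_last {n m : ℕ} (x : Fin m → ℝ) : joinEmb₂ n m x (Fin.last _) = 1 := by
  simp [joinEmb₂]

/-- The two kinds of exponents -/
noncomputable def ex1 (n m : ℕ) (s : Fin n →₀ ℕ) : Fin (n + m + 1) →₀ ℕ :=
  Finsupp.mapDomain (ix1 n m) s

/-- second kind -/
noncomputable def ex2 (n m : ℕ) (s : Fin m →₀ ℕ) : Fin (n + m + 1) →₀ ℕ :=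
  Finsupp.single (Fin.last _) 1 + Finsupp.mapDomain (ix2 n m) s

theorem ix1_ne_ix2 {n m : ℕ} (i j) : ix1 n m i ≠ ix2 n m j := by
  simp only [ix1, ix2, ne_eq, Fin.ext_iff, Fin.val_castSucc, Fin.val_castAdd, Fin.val_natAdd]
  omega
theorem ix1_ne_last {n m : ℕ} (i) : ix1 n m i ≠ Fin.last _ := by
  simp only [ix1, ne_eq, Fin.ext_iff, Fin.val_castSucc, Fin.val_castAdd, Fin.val_last]
  omega
theorem ix2_ne_last {n m : ℕ} (i) : ix2 n m i ≠ Fin.last _ := by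
  simp only [ix2, ne_eq, Fin.ext_iff, Fin.val_castSucc, Fin.val_natAdd, Fin.val_last]
  omega

theorem ex1_emb {n m : ℕ} (s : Fin n →₀ ℕ) :
    (fun i => ((ex1 n m s i : ℕ) : ℝ)) = joinEmb₁ n m (fun i => (s i : ℝ)) := by
  funext k
  revert k
  refine ix_cases (fun i => ?_) (fun j => ?_) ?_
  · rw [emb1_ix1, ex1, Finsupp.mapDomain_apply (ix1_inj n m)]
  · rw [emb1_ix2, ex1, Finsupp.mapDomain_notin_range]
    · simp
    · rintro ⟨i, hi⟩; exact ix1_ne_ix2 _ _ hi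
  · rw [emb1_last, ex1, Finsupp.mapDomain_notin_range]
    · simp
    · rintro ⟨i, hi⟩; exact ix1_ne_last _ hi

theorem ex2_emb {n m : ℕ} (s : Fin m →₀ ℕ) :
    (fun i => ((ex2 n m s i : ℕ) : ℝ)) = joinEmb₂ n m (fun i => (s i : ℝ)) := by
  funext k
  revert k
  refine ix_cases (fun i => ?_) (fun j => ?_) ?_
  · rw [emb2_ix1, ex2, Finsupp.add_apply, Finsupp.mapDomain_notin_range]
    · simp [Finsupp.single_apply, (ix1_ne_last _).symm]
    · rintro ⟨j, hi⟩; exact ix1_ne_ix2 _ _ hi.symm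
  · rw [emb2_ix2, ex2, Finsupp.add_apply, Finsupp.mapDomain_apply (ix2_inj n m)]
    simp [Finsupp.single_apply, (ix2_ne_last _).symm]
  · rw [emb2_last, ex2, Finsupp.add_apply, Finsupp.mapDomain_notin_range]
    · simp
    · rintro ⟨i, hi⟩; exact ix2_ne_last _ hi

theorem emb1_convex {n m : ℕ} {P : Set (Fin n → ℝ)} (hP : Convex ℝ P) :
    Convex ℝ (joinEmb₁ n m '' P) := by
  rintro _ ⟨x, hx, rfl⟩ _ ⟨y, hy, rfl⟩ a b ha hb hab
  refine ⟨_, hP hx hy ha hb hab, ?_⟩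
  funext k
  revert k
  refine ix_cases (fun i => ?_) (fun j => ?_) ?_ <;>
    simp [emb1_ix1, emb1_ix2, emb1_last]

theorem emb2_convex {n m : ℕ} {P : Set (Fin m → ℝ)} (hP : Convex ℝ P) :
    Convex ℝ (joinEmb₂ n m '' P) := by
  rintro _ ⟨x, hx, rfl⟩ _ ⟨y, hy, rfl⟩ a b ha hb hab
  refine ⟨_, hP hx hy ha hb hab, ?_⟩
  funext k
  revert k
  refine ix_cases (fun i => ?_) (fun j => ?_) ?_ <;>
    simp [emb2_ix1, emb2_ix2, emb2_last, hab]

theorem lattice_join {n m : ℕ} {P : Set (Fin n → ℝ)} {Q : Set (Fin m → ℝ)}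
    (hP : Convex ℝ P) (hQ : Convex ℝ Q) (hPn : P.Nonempty) (hQn : Q.Nonempty) :
    latticeExps (joinPolytope P Q) = ex1 n m '' latticeExps P ∪ ex2 n m '' latticeExps Q := by
  ext d
  constructor
  · intro hd
    rw [latticeExps, Set.mem_setOf_eq, joinPolytope,
      convexHull_union (hPn.image _) (hQn.image _), (emb1_convex hP).convexHull_eq,
      (emb2_convex hQ).convexHull_eq, mem_convexJoin] at hd
    obtain ⟨_, ⟨x, hx, rfl⟩, _, ⟨y, hy, rfl⟩, a, b, ha, hb, hab, h⟩ := hd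
    have hl := congrFun h (Fin.last _)
    simp only [Pi.add_apply, Pi.smul_apply, emb1_last, emb2_last, smul_eq_mul, mul_zero,
      mul_one, zero_add] at hl
    have hle : d (Fin.last _) ≤ 1 := by
      have : ((d (Fin.last _) : ℕ) : ℝ) ≤ 1 := by linarith
      exact_mod_cast this
    have key : ∀ e : Fin (n + m + 1) →₀ ℕ,
        (fun i => ((e i : ℕ) : ℝ)) = (fun i => ((d i : ℕ) : ℝ)) → e = d := by
      intro e he
      ext k
      exact_mod_cast congrFun he k
    rcases Nat.le_one_iff_eq_zero_or_eq_one.mp hle with h0 | h1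
    · left
      have hb0 : b = 0 := by rw [hl, h0]; simp
      have ha1 : a = 1 := by linarith
      subst hb0 ha1
      rw [one_smul, zero_smul, add_zero] at h
      have hxs : (fun i => (((Finsupp.equivFunOnFinite.symm
          (fun i => d (ix1 n m i)) : Fin n →₀ ℕ) i : ℕ) : ℝ)) = x := by
        funext i
        have := congrFun h (ix1 n m i)
        rw [emb1_ix1] at this
        simp [this]
      refine ⟨Finsupp.equivFunOnFinite.symm (fun i => d (ix1 n m i)), ?_, ?_⟩
      · rw [latticeExps, Set.mem_setOf_eq, hxs]; exact hx
      · apply key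
        rw [ex1_emb, hxs, h]
    · right
      have hb0 : b = 1 := by rw [hl, h1]; simp
      have ha1 : a = 0 := by linarith
      subst hb0 ha1
      rw [one_smul, zero_smul, zero_add] at h
      have hxs : (fun i => (((Finsupp.equivFunOnFinite.symm
          (fun i => d (ix2 n m i)) : Fin m →₀ ℕ) i : ℕ) : ℝ)) = y := by
        funext i
        have := congrFun h (ix2 n m i)
        rw [emb2_ix2] at this
        simp [this]
      refine ⟨Finsupp.equivFunOnFinite.symm (fun i => d (ix2 n m i)), ?_, ?_⟩
      · rw [latticeExps, Set.mem_setOf_eq, hxs]; exact hy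
      · apply key
        rw [ex2_emb, hxs, h]
  · rintro (⟨s, hs, rfl⟩ | ⟨s, hs, rfl⟩)
    · rw [latticeExps, Set.mem_setOf_eq, ex1_emb]
      exact subset_convexHull _ _ (Or.inl ⟨_, hs, rfl⟩)
    · rw [latticeExps, Set.mem_setOf_eq, ex2_emb]
      exact subset_convexHull _ _ (Or.inr ⟨_, hs, rfl⟩)

/-- the combined polynomial -/
noncomputable def comb {K : Type} [Field K] {n m : ℕ} (g : MvPolynomial (Fin n) K)
    (h : MvPolynomial (Fin m) K) : MvPolynomial (Fin (n + m + 1)) K :=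
  rename (ix1 n m) g + X (Fin.last _) * rename (ix2 n m) h

theorem comb_decomp {K : Type} [Field K] {n m : ℕ} {S : Set (Fin n →₀ ℕ)}
    {T : Set (Fin m →₀ ℕ)} (f : MvPolynomial (Fin (n + m + 1)) K)
    (hf : (↑f.support : Set (Fin (n + m + 1) →₀ ℕ)) ⊆ ex1 n m '' S ∪ ex2 n m '' T) :
    ∃ (g : MvPolynomial (Fin n) K) (h : MvPolynomial (Fin m) K),
      (↑g.support : Set (Fin n →₀ ℕ)) ⊆ S ∧ (↑h.support : Set (Fin m →₀ ℕ)) ⊆ T ∧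
      f = comb g h := by
  classical
  rw [← f.support_sum_monomial_coeff]
  refine Finset.sum_induction _ (fun f => ∃ (g : MvPolynomial (Fin n) K)
    (h : MvPolynomial (Fin m) K),
      (↑g.support : Set (Fin n →₀ ℕ)) ⊆ S ∧ (↑h.support : Set (Fin m →₀ ℕ)) ⊆ T ∧
      f = comb g h) ?_ ?_ ?_
  · rintro _ _ ⟨g, h, hg, hh, rfl⟩ ⟨g', h', hg', hh', rfl⟩
    refine ⟨g + g', h + h', ?_, ?_, ?_⟩
    · refine (Finset.coe_subset.mpr support_add).trans ?_
      rw [Finset.coe_union]; exact Set.union_subset hg hg'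
    · refine (Finset.coe_subset.mpr support_add).trans ?_
      rw [Finset.coe_union]; exact Set.union_subset hh hh'
    · simp only [comb, map_add]; ring
  · exact ⟨0, 0, by simp, by simp, by simp [comb]⟩
  · intro d hd
    rcases hf hd with ⟨s, hs, rfl⟩ | ⟨s, hs, rfl⟩
    · refine ⟨monomial s (coeff (ex1 n m s) f), 0, ?_, by simp, ?_⟩
      · refine (Finset.coe_subset.mpr support_monomial_subset).trans ?_
        simpa using hs
      · simp [comb, rename_monomial, ex1]
    · refine ⟨0, monomial s (coeff (ex2 n m s) f), by simp, ?_, ?_⟩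
      · refine (Finset.coe_subset.mpr support_monomial_subset).trans ?_
        simpa using hs
      · simp [comb, rename_monomial, ex2, X, monomial_mul]

theorem comb_support {K : Type} [Field K] {n m : ℕ} {S : Set (Fin n →₀ ℕ)}
    {T : Set (Fin m →₀ ℕ)} (g : MvPolynomial (Fin n) K) (h : MvPolynomial (Fin m) K)
    (hg : (↑g.support : Set (Fin n →₀ ℕ)) ⊆ S) (hh : (↑h.support : Set (Fin m →₀ ℕ)) ⊆ T) :
    (↑(comb g h).support : Set (Fin (n + m + 1) →₀ ℕ)) ⊆ ex1 n m '' S ∪ ex2 n m '' T := by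
  classical
  refine (Finset.coe_subset.mpr support_add).trans ?_
  rw [Finset.coe_union, support_rename_of_injective (ix1_inj n m), support_X_mul,
    support_rename_of_injective (ix2_inj n m)]
  intro d hd
  simp only [Finset.coe_image, Finset.coe_map, Set.mem_union, Set.mem_image] at hd
  rcases hd with ⟨s, hs, rfl⟩ | ⟨_, ⟨s, hs, rfl⟩, rfl⟩
  · exact Or.inl ⟨s, hg hs, rfl⟩
  · exact Or.inr ⟨s, hh hs, rfl⟩

theorem comb_ne_zero {K : Type} [Field K] {n m : ℕ} (g : MvPolynomial (Fin n) K)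
    (h : MvPolynomial (Fin m) K) (hgh : g ≠ 0 ∨ h ≠ 0) : comb g h ≠ 0 := by
  intro h0
  have hg : g = 0 := by
    have := congrArg (aeval (R := K) (fun k : Fin (n + m + 1) =>
      if hk : (k : ℕ) < n then (X ⟨k, hk⟩ : MvPolynomial (Fin n) K) else 0)) h0
    rw [comb, map_add, map_mul, aeval_X, aeval_rename] at this
    have e : (fun k : Fin (n + m + 1) =>
      if hk : (k : ℕ) < n then (X ⟨k, hk⟩ : MvPolynomial (Fin n) K) else 0) ∘ ix1 n m = X := by
      funext i; simp [ix1]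
    rw [e, aeval_X_left] at this
    simpa using this
  subst hg
  have hh : h ≠ 0 := by simpa using hgh
  rw [comb, map_zero, zero_add] at h0
  rcases mul_eq_zero.mp h0 with h1 | h1
  · exact X_ne_zero _ h1
  · exact hh ((map_eq_zero_iff _ (rename_injective _ (ix2_inj n m))).mp h1)

/-- torus -/
def tor (K : Type) [Field K] (n : ℕ) : Set (Fin n → K) := {a | ∀ i, a i ≠ 0}

theorem tor_card (K : Type) [Field K] [Fintype K] (n : ℕ) :
    (tor K n).ncard = (Fintype.card K - 1) ^ n := by
  classical
  have : tor K n = ((Fintype.piFinset (fun _ : Fin n => (Finset.univ.erase (0 : K))) :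
      Finset (Fin n → K)) : Set (Fin n → K)) := by
    ext a; simp [tor]
  rw [this, Set.ncard_coe_finset, Fintype.card_piFinset]
  simp [Finset.card_erase_of_mem]

theorem count_aux {K α β : Type} [Field K] [Fintype K] [Finite α] [Finite β]
    (A : Set α) (B : Set β) (G : α → K) (H : β → K) :
    {p : α × β × K | p.1 ∈ A ∧ p.2.1 ∈ B ∧ p.2.2 ≠ 0 ∧ G p.1 + p.2.2 * H p.2.1 = 0}.ncard =
      {a | a ∈ A ∧ G a = 0}.ncard * ({b | b ∈ B ∧ H b = 0}.ncard * (Fintype.card K - 1)) +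
      (A \ {a | a ∈ A ∧ G a = 0}).ncard * (B \ {b | b ∈ B ∧ H b = 0}).ncard := by
  classical
  have hK : ({0}ᶜ : Set K).ncard = Fintype.card K - 1 := by
    rw [Set.ncard_compl, Set.ncard_singleton, Nat.card_eq_fintype_card]
  rw [← hK, ← Set.ncard_prod, ← Set.ncard_prod, ← Set.ncard_prod,
    ← Set.ncard_image_of_injective (f := fun p : α × β => (p.1, p.2, -(G p.1) / H p.2))
      ((A \ {a | a ∈ A ∧ G a = 0}) ×ˢ (B \ {b | b ∈ B ∧ H b = 0})),
    ← Set.ncard_union_eq]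
  · congr 1
    ext ⟨x, y, z⟩
    simp only [Set.mem_setOf_eq, Set.mem_union, Set.mem_prod, Set.mem_compl_iff,
      Set.mem_singleton_iff, Set.mem_image, Set.mem_diff, Prod.exists, Prod.mk.injEq]
    constructor
    · rintro ⟨hx, hy, hz, h⟩
      by_cases hH : H y = 0
      · left
        rw [hH, mul_zero, add_zero] at h
        exact ⟨⟨hx, h⟩, ⟨hy, hH⟩, hz⟩
      · right
        have hG : G x ≠ 0 := by
          intro hG
          rw [hG, zero_add] at h
          exact (mul_ne_zero hz hH) h
        refine ⟨x, y, ⟨⟨hx, fun h => hG h.2⟩, ⟨hy, fun h => hH h.2⟩⟩, rfl, rfl, ?_⟩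
        rw [div_eq_iff hH]
        linear_combination -h
    · rintro (⟨⟨hx, h1⟩, ⟨hy, h2⟩, hz⟩ | ⟨x', y', ⟨⟨hx, h1⟩, ⟨hy, h2⟩⟩, rfl, rfl, rfl⟩)
      · exact ⟨hx, hy, hz, by rw [h1, h2]; simp⟩
      · have hG : G x' ≠ 0 := fun h => h1 ⟨hx, h⟩
        have hH : H y' ≠ 0 := fun h => h2 ⟨hy, h⟩
        refine ⟨hx, hy, div_ne_zero (neg_ne_zero.mpr hG) hH, ?_⟩
        field_simp
        ring
  · rw [Set.disjoint_left]
    rintro _ ⟨⟨h1, h2⟩, _⟩ ⟨⟨x, y⟩, ⟨⟨h3, h4⟩, _⟩, rfl⟩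
    exact h4 ⟨h1, h2⟩
  · rintro ⟨x, y⟩ ⟨x', y'⟩ h
    simp only [Prod.mk.injEq] at h
    exact Prod.ext h.1 h.2.1

theorem torusZeros_comb {K : Type} [Field K] [Fintype K] {n m : ℕ}
    (g : MvPolynomial (Fin n) K) (h : MvPolynomial (Fin m) K) :
    (torusZeros (comb g h)).ncard =
      (torusZeros g).ncard * ((torusZeros h).ncard * (Fintype.card K - 1)) +
      ((Fintype.card K - 1) ^ n - (torusZeros g).ncard) *
      ((Fintype.card K - 1) ^ m - (torusZeros h).ncard) := by
  have c := count_aux (tor K n) (tor K m) (fun x => eval x g) (fun y => eval y h)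
  rw [Set.ncard_diff (fun x hx => hx.1), Set.ncard_diff (fun x hx => hx.1),
    tor_card, tor_card] at c
  refine Eq.trans ?_ c
  rw [← Set.ncard_image_of_injective (f := fun p : (Fin (n + m + 1) → K) =>
    ((fun i => p (ix1 n m i), fun j => p (ix2 n m j), p (Fin.last _)) :
      (Fin n → K) × (Fin m → K) × K)) (torusZeros (comb g h))]
  · congr 1
    have ev : ∀ a, eval a (comb g h) = eval (fun i => a (ix1 n m i)) g +
        a (Fin.last _) * eval (fun i => a (ix2 n m i)) h := by
      intro a
      simp [comb, eval_rename, Function.comp_def]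
    ext ⟨x, y, z⟩
    simp only [torusZeros, Set.mem_image, Set.mem_setOf_eq, ev, tor, Prod.mk.injEq]
    constructor
    · rintro ⟨a, ⟨ha, h0⟩, rfl, rfl, rfl⟩
      exact ⟨fun i => ha _, fun i => ha _, ha _, h0⟩
    · rintro ⟨hx, hy, hz, h0⟩
      have e1 : ∀ i, (Fin.snoc (Fin.append x y) z : Fin (n + m + 1) → K) (ix1 n m i) = x i := by
        intro i; rw [ix1]; erw [Fin.snoc_castSucc]; simp
      have e2 : ∀ i, (Fin.snoc (Fin.append x y) z : Fin (n + m + 1) → K) (ix2 n m i) = y i := by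
        intro i; rw [ix2]; erw [Fin.snoc_castSucc]; simp
      have e3 : (Fin.snoc (Fin.append x y) z : Fin (n + m + 1) → K) (Fin.last _) = z := by
        simp
      refine ⟨Fin.snoc (Fin.append x y) z, ⟨?_, ?_⟩, funext e1, funext e2, e3⟩
      · refine ix_cases (fun i => ?_) (fun i => ?_) ?_
        · rw [e1]; exact hx i
        · rw [e2]; exact hy i
        · rw [e3]; exact hz
      · rw [funext e1, funext e2, e3]; exact h0
  · intro a b hab
    simp only [Prod.mk.injEq] at hab
    funext k
    revert k
    exact ix_cases (fun i => congrFun hab.1 i) (fun i => congrFun hab.2.1 i) hab.2.2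

theorem zeros_le {K : Type} [Field K] [Fintype K] {n : ℕ} (g : MvPolynomial (Fin n) K) :
    (torusZeros g).ncard ≤ (Fintype.card K - 1) ^ n := by
  rw [← tor_card]
  exact Set.ncard_le_ncard (fun x hx => hx.1)

theorem zeros_zero {K : Type} [Field K] [Fintype K] {n : ℕ} :
    (torusZeros (0 : MvPolynomial (Fin n) K)).ncard = (Fintype.card K - 1) ^ n := by
  rw [← tor_card]
  congr 1
  ext a
  simp [torusZeros, tor]

/-- relative weight -/
noncomputable def wt {K : Type} [Field K] [Fintype K] {n : ℕ} (g : MvPolynomial (Fin n) K) : ℝ :=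
  1 - ((torusZeros g).ncard : ℝ) / ((Fintype.card K : ℝ) - 1) ^ n

theorem card_pos' (K : Type) [Field K] [Fintype K] : (1 : ℝ) ≤ (Fintype.card K : ℝ) - 1 := by
  have : 2 ≤ Fintype.card K := Fintype.one_lt_card
  have : (2 : ℝ) ≤ Fintype.card K := by exact_mod_cast this
  linarith

theorem wt_comb {K : Type} [Field K] [Fintype K] {n m : ℕ}
    (g : MvPolynomial (Fin n) K) (h : MvPolynomial (Fin m) K) :
    wt (comb g h) = wt g + wt h
      - wt g * wt h * ((Fintype.card K : ℝ) / ((Fintype.card K : ℝ) - 1)) := by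
  have h1 := card_pos' K
  have hc : ((Fintype.card K - 1 : ℕ) : ℝ) = (Fintype.card K : ℝ) - 1 := by
    rw [Nat.cast_sub Fintype.card_pos]; simp
  unfold wt
  rw [torusZeros_comb]
  push_cast [Nat.cast_sub (zeros_le g), Nat.cast_sub (zeros_le h)]
  rw [hc]
  generalize ((torusZeros g).ncard : ℝ) = A
  generalize ((torusZeros h).ncard : ℝ) = B
  obtain ⟨r, hr⟩ : ∃ r : ℝ, r = (Fintype.card K : ℝ) - 1 := ⟨_, rfl⟩
  have hr' : (Fintype.card K : ℝ) = r + 1 := by linarith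
  rw [← hr] at h1 ⊢
  rw [hr']
  have : r ≠ 0 := by positivity
  rw [pow_succ, pow_add]
  field_simp
  ring

theorem wt_zero {K : Type} [Field K] [Fintype K] {n : ℕ} :
    wt (0 : MvPolynomial (Fin n) K) = 1 - 1 := by
  have h1 := card_pos' K
  have hc : ((Fintype.card K - 1 : ℕ) : ℝ) = (Fintype.card K : ℝ) - 1 := by
    rw [Nat.cast_sub Fintype.card_pos]; simp
  rw [wt, zeros_zero]
  push_cast
  rw [hc, div_self (by positivity)]

theorem wt_le_one {K : Type} [Field K] [Fintype K] {n : ℕ} (g : MvPolynomial (Fin n) K) :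
    wt g ≤ 1 := by
  have h1 := card_pos' K
  rw [wt]
  have : 0 ≤ ((torusZeros g).ncard : ℝ) / ((Fintype.card K : ℝ) - 1) ^ n := by positivity
  linarith

theorem delta_isLeast {K : Type} [Field K] [Fintype K] {n : ℕ} (P : Set (Fin n → ℝ))
    (hne : (latticeExps P).Nonempty) :
    IsLeast {w | ∃ f : MvPolynomial (Fin n) K, f ≠ 0 ∧
      (↑f.support : Set (Fin n →₀ ℕ)) ⊆ latticeExps P ∧ w = wt f} (deltaP K P) := by
  have h1 := card_pos' K
  have hpos : (0 : ℝ) < ((Fintype.card K : ℝ) - 1) ^ n := by positivity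
  have hd : deltaP K P = 1 - (NP K P : ℝ) / ((Fintype.card K : ℝ) - 1) ^ n := by
    rw [deltaP, sub_div, div_self hpos.ne']
  have hb : BddAbove {z | ∃ f : MvPolynomial (Fin n) K, f ≠ 0 ∧
    (↑f.support : Set (Fin n →₀ ℕ)) ⊆ latticeExps P ∧ z = (torusZeros f).ncard} := by
    refine ⟨(Fintype.card K - 1) ^ n, ?_⟩
    rintro _ ⟨f, _, _, rfl⟩
    exact zeros_le f
  constructor
  · obtain ⟨s, hs⟩ := hne
    have hm : NP K P ∈ _ := Nat.sSup_mem ⟨_, monomial s (1 : K), by simp, by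
        refine (Finset.coe_subset.mpr support_monomial_subset).trans ?_
        simpa using hs, rfl⟩ hb
    obtain ⟨f, hf, hfs, hz⟩ := hm
    exact ⟨f, hf, hfs, by rw [hd, hz, wt]⟩
  · rintro _ ⟨f, hf, hfs, rfl⟩
    have : (torusZeros f).ncard ≤ NP K P := le_csSup hb ⟨f, hf, hfs, rfl⟩
    rw [hd, wt]
    gcongr

theorem real_aux {r dP dQ a b : ℝ} (hr : 1 ≤ r) (hP : dP ≤ 1 - 2 / (r + 1))
    (ha : dP ≤ a) (ha1 : a ≤ 1) (hb : dQ ≤ b) (hb1 : b ≤ 1) :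
    min (min dP dQ) (dP + dQ - dP * dQ * ((r + 1) / r)) ≤ a + b - a * b * ((r + 1) / r) := by
  have hr0 : 0 < r := by linarith
  obtain ⟨c, hc⟩ : ∃ c, c = (r + 1) / r := ⟨_, rfl⟩
  have hcr : c * r = r + 1 := by rw [hc]; field_simp
  have hc' : c = 1 + 1 / r := by rw [hc]; field_simp
  have hc0 : 0 < c := by rw [hc]; positivity
  rw [← hc]
  have h3 : 1 / r ≤ 2 / (r + 1) := by
    rw [div_le_div_iff₀ hr0 (by linarith)]; linarith
  rcases le_or_gt (b * c) 1 with h | h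
  · refine (min_le_right _ _).trans ?_
    have e : (1 - 2 / (r + 1)) * c ≤ 1 := by
      rw [hc]; field_simp; linarith
    have e2 : dP * c ≤ 1 := (mul_le_mul_of_nonneg_right hP hc0.le).trans e
    nlinarith [mul_nonneg (sub_nonneg.mpr ha) (sub_nonneg.mpr h),
      mul_nonneg (sub_nonneg.mpr hb) (sub_nonneg.mpr e2)]
  · refine (min_le_left _ _).trans ((min_le_left _ _).trans ?_)
    have e : b * (1 / r) ≤ 1 * (1 / r) := by gcongr
    have e3 : b * c = b + b * (1 / r) := by rw [hc']; ring
    nlinarith [mul_nonneg (sub_nonneg.mpr ha1) (sub_nonneg.mpr h.le)]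

theorem polytope_facts {n q : ℕ} {P : Set (Fin n → ℝ)} (hP : IsIntegralPolytope P)
    (hb : InBox q P) : Convex ℝ P ∧ P.Nonempty ∧ (latticeExps P).Nonempty := by
  obtain ⟨V, ⟨v, hv⟩, rfl⟩ := hP
  have hm : (fun i => (v i : ℝ)) ∈ convexHull ℝ
      ((fun (v : Fin n → ℤ) (i : Fin n) => (v i : ℝ)) '' (↑V : Set (Fin n → ℤ))) :=
    subset_convexHull _ _ ⟨v, hv, rfl⟩
  refine ⟨convex_convexHull _ _, ⟨_, hm⟩, Finsupp.equivFunOnFinite.symm fun i => (v i).toNat, ?_⟩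
  rw [latticeExps, Set.mem_setOf_eq]
  convert hm using 2 with i
  have h0 : (0 : ℤ) ≤ v i := by exact_mod_cast (hb _ hm i).1
  simp only [Finsupp.equivFunOnFinite_symm_apply_apply]
  have := Int.toNat_of_nonneg h0
  exact_mod_cast this

/-- If `N(P) ≥ 2(q-1)^n/q` and `N(Q) ≥ 2(q-1)^m/q` then
`δ(P*Q) = min{δ(P), δ(Q), δ(P) + δ(Q) - δ(P)δ(Q)·q/(q-1)}`. -/
theorem stmt9 (K : Type) [Field K] [Fintype K] (q : ℕ) (hq : Fintype.card K = q)
    (n m : ℕ) (P : Set (Fin n → ℝ)) (Q : Set (Fin m → ℝ))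
    (hP : IsIntegralPolytope P) (hQ : IsIntegralPolytope Q)
    (hPbox : InBox q P) (hQbox : InBox q Q)
    (hNP : 2 * ((q : ℝ) - 1) ^ n / q ≤ (NP K P : ℝ))
    (hNQ : 2 * ((q : ℝ) - 1) ^ m / q ≤ (NP K Q : ℝ)) :
    deltaP K (joinPolytope P Q)
      = min (min (deltaP K P) (deltaP K Q))
          (deltaP K P + deltaP K Q
            - deltaP K P * deltaP K Q * ((q : ℝ) / ((q : ℝ) - 1))) := by
  subst hq
  obtain ⟨cP, nP, lP⟩ := polytope_facts hP hPbox
  obtain ⟨cQ, nQ, lQ⟩ := polytope_facts hQ hQbox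
  have hL := lattice_join cP cQ nP nQ
  have h1 := card_pos' K
  have IP := delta_isLeast (K := K) P lP
  have IQ := delta_isLeast (K := K) Q lQ
  have IJ := delta_isLeast (K := K) (joinPolytope P Q)
    (by rw [hL]; exact (lP.image _).inl)
  rw [hL] at IJ
  apply le_antisymm
  · obtain ⟨g, hg, hgs, hgw⟩ := IP.1
    obtain ⟨h, hh, hhs, hhw⟩ := IQ.1
    refine le_min (le_min ?_ ?_) ?_
    · have := IJ.2 ⟨comb g 0, comb_ne_zero _ _ (Or.inl hg), comb_support g 0 hgs (by simp), rfl⟩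
      rw [wt_comb, wt_zero, ← hgw] at this
      linarith
    · have := IJ.2 ⟨comb 0 h, comb_ne_zero _ _ (Or.inr hh), comb_support 0 h (by simp) hhs, rfl⟩
      rw [wt_comb, wt_zero, ← hhw] at this
      linarith
    · have := IJ.2 ⟨comb g h, comb_ne_zero _ _ (Or.inl hg), comb_support g h hgs hhs, rfl⟩
      rwa [wt_comb, ← hgw, ← hhw] at this
  · obtain ⟨f, hf, hfs, hfw⟩ := IJ.1
    obtain ⟨g, h, hgs, hhs, rfl⟩ := comb_decomp f hfs
    rw [hfw, wt_comb]
    by_cases hg : g = 0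
    · by_cases hh : h = 0
      · exact absurd (by subst hg hh; simp [comb]) hf
      · refine (min_le_left _ _).trans ((min_le_right _ _).trans ?_)
        have := IQ.2 ⟨h, hh, hhs, rfl⟩
        rw [hg, wt_zero]
        linarith
    · by_cases hh : h = 0
      · refine (min_le_left _ _).trans ((min_le_left _ _).trans ?_)
        have := IP.2 ⟨g, hg, hgs, rfl⟩
        rw [hh, wt_zero]
        linarith
      · have hp : (0 : ℝ) < ((Fintype.card K : ℝ) - 1) ^ n := by positivity
        have key := real_aux (r := (Fintype.card K : ℝ) - 1) (dP := deltaP K P)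
          (dQ := deltaP K Q) (a := wt g) (b := wt h) h1 ?_ (IP.2 ⟨g, hg, hgs, rfl⟩)
          (wt_le_one g) (IQ.2 ⟨h, hh, hhs, rfl⟩) (wt_le_one h)
        · simpa only [sub_add_cancel] using key
        · rw [deltaP, sub_div, div_self hp.ne', sub_add_cancel]
          have : 2 / (Fintype.card K : ℝ) ≤ (NP K P : ℝ) / ((Fintype.card K : ℝ) - 1) ^ n := by
            rw [le_div_iff₀ hp]
            calc _ = _ := by ring
              _ ≤ _ := hNP
          linarith
end

section
/- Let q ≥ 3 be an integer and let ℓ : ℕ → ℕ be any sequence with ℓ_j ≤ q−2 for all j. Define a_i = Π_{j=0}^{i} (q−1−ℓ_j)/(q−1) and b_i = Π_{j=0}^{i} (ℓ_j+1)/(q−1) (these are the relative minimum distance and information rate of the toric code of the box [0,ℓ_0]×⋯×[0,ℓ_i]). If a_i → δ and b_i → R as i → ∞, then δ = 0 or R = 0; i.e., the infinite family of toric codes of boxes is never good. -/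
/-- For the family of boxes `[0,ℓ₀] × ⋯ × [0,ℓ_i] ⊆ [0,q-2]^(i+1)`, if the relative
minimum distances converge to `δ` and the information rates converge to `R`,
then `δ = 0` or `R = 0`: the infinite family of toric codes of boxes is never good. -/
theorem stmt12 (q : ℕ) (hq : 3 ≤ q) (l : ℕ → ℕ) (hl : ∀ j, l j ≤ q - 2)
    (δ R : ℝ)
    (hδ : Filter.Tendsto
      (fun i => ∏ j ∈ Finset.range (i + 1), (((q : ℝ) - 1 - (l j : ℝ)) / ((q : ℝ) - 1)))
      Filter.atTop (nhds δ))
    (hR : Filter.Tendsto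
      (fun i => ∏ j ∈ Finset.range (i + 1), (((l j : ℝ) + 1) / ((q : ℝ) - 1)))
      Filter.atTop (nhds R)) :
    δ = 0 ∨ R = 0 := by
  have hm : (2 : ℝ) ≤ (q : ℝ) - 1 := by
    have : (3 : ℝ) ≤ q := by exact_mod_cast hq
    linarith
  have hl' : ∀ j, (l j : ℝ) ≤ (q : ℝ) - 1 := by
    intro j
    have h : l j + 1 ≤ q := by have := hl j; omega
    have h2 : (l j : ℝ) + 1 ≤ q := by exact_mod_cast h
    linarith
  have hprod := hδ.mul hR
  have hz : Filter.Tendsto (fun i : ℕ => ((9 : ℝ) / 16) ^ (i + 1)) Filter.atTop (nhds 0) :=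
    (tendsto_pow_atTop_nhds_zero_of_lt_one (by norm_num) (by norm_num)).comp
      (Filter.tendsto_add_atTop_nat 1)
  have hnn : ∀ j, 0 ≤ (((q : ℝ) - 1 - (l j : ℝ)) / ((q : ℝ) - 1)) *
      (((l j : ℝ) + 1) / ((q : ℝ) - 1)) := by
    intro j
    have h1 : 0 ≤ (q : ℝ) - 1 - l j := by linarith [hl' j]
    have h2 : 0 ≤ (q : ℝ) - 1 := by linarith
    positivity
  have hle : ∀ j, (((q : ℝ) - 1 - (l j : ℝ)) / ((q : ℝ) - 1)) *
      (((l j : ℝ) + 1) / ((q : ℝ) - 1)) ≤ 9 / 16 := by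
    intro j
    generalize (q : ℝ) - 1 = m at hm
    generalize (l j : ℝ) = x
    rw [div_mul_div_comm, div_le_iff₀ (by nlinarith)]
    nlinarith [sq_nonneg (m - x - (x + 1)), mul_nonneg (sub_nonneg.2 hm) (sub_nonneg.2 hm)]
  have h0 : δ * R = 0 := by
    refine tendsto_nhds_unique hprod (squeeze_zero ?_ ?_ hz)
    · intro i
      rw [← Finset.prod_mul_distrib]
      exact Finset.prod_nonneg fun j _ => hnn j
    · intro i
      rw [← Finset.prod_mul_distrib]
      calc _ ≤ ∏ j ∈ Finset.range (i + 1), ((9 : ℝ) / 16) :=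
            Finset.prod_le_prod (fun j _ => hnn j) (fun j _ => hle j)
        _ = _ := by rw [Finset.prod_const, Finset.card_range]
  exact mul_eq_zero.mp h0
end

section
/- Let q ≥ 3 be an integer and let ℓ : ℕ → ℕ be any sequence with ℓ_j ≤ q−2 for all j. For each i, let P_i = conv{0, ℓ₀·e₁, ℓ₁·e₂, …, ℓ_i·e_{i+1}} ⊆ ℝ^{i+1} be the simplex obtained by iterated direct sums of the segments [0,ℓ_j]. Then the information rate of the associated toric codes tends to zero: |P_i ∩ ℤ^{i+1}|/(q−1)^{i+1} → 0 as i → ∞. -/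
/-- The integer lattice points of `P`. -/
def latticePoints {n : ℕ} (P : Set (Fin n → ℝ)) : Set (Fin n → ℝ) :=
  {x ∈ P | ∀ i, ∃ z : ℤ, x i = (z : ℝ)}

/-- The simplex `conv{0, ℓ₀e₁, ℓ₁e₂, …, ℓ_i e_{i+1}} ⊆ ℝ^(i+1)` obtained by iterated
direct sums of the segments `[0, ℓ_j]`. -/
noncomputable def simplexFamily (l : ℕ → ℕ) (i : ℕ) : Set (Fin (i + 1) → ℝ) :=
  convexHull ℝ
    (insert (0 : Fin (i + 1) → ℝ)
      {v | ∃ j : Fin (i + 1), v = fun t => if t = j then ((l (j : ℕ) : ℕ) : ℝ) else 0})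

theorem simplex_subset (m : ℕ) (l : ℕ → ℕ) (hl : ∀ j, l j ≤ m) (i : ℕ) :
    simplexFamily l i ⊆ {x | (∀ t, 0 ≤ x t) ∧ ∑ t, x t ≤ (m : ℝ)} := by
  unfold simplexFamily
  apply convexHull_min
  · intro v hv
    rcases hv with rfl | ⟨j, rfl⟩
    · simp
    · refine ⟨fun t => ?_, ?_⟩
      · dsimp only
        split_ifs <;> positivity
      · simpa using hl j
  · intro x hx y hy a b ha hb hab
    refine ⟨fun t => ?_, ?_⟩
    · have h1 := hx.1 t
      have h2 := hy.1 t
      simp only [Pi.add_apply, Pi.smul_apply, smul_eq_mul]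
      positivity
    · simp only [Pi.add_apply, Pi.smul_apply, smul_eq_mul, Finset.sum_add_distrib,
        ← Finset.mul_sum]
      have h1 := mul_le_mul_of_nonneg_left hx.2 ha
      have h2 := mul_le_mul_of_nonneg_left hy.2 hb
      have h3 : a * (m : ℝ) + b * m = m := by rw [← add_mul, hab, one_mul]
      linarith

theorem points_subset (m : ℕ) (l : ℕ → ℕ) (hl : ∀ j, l j ≤ m) (i : ℕ) :
    latticePoints (simplexFamily l i) ⊆
      Set.range (fun (s : Sym (Option (Fin (i + 1))) m) (t : Fin (i + 1)) =>
        ((Multiset.count (some t) (s : Multiset (Option (Fin (i + 1)))) : ℕ) : ℝ)) := by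
  rintro x ⟨hx, hz⟩
  obtain ⟨h0, hs⟩ := simplex_subset m l hl i hx
  have hn : ∀ t, ∃ n : ℕ, x t = (n : ℝ) := by
    intro t
    obtain ⟨z, h⟩ := hz t
    have h1 := h0 t
    rw [h] at h1
    have h2 : 0 ≤ z := by exact_mod_cast h1
    lift z to ℕ using h2
    exact ⟨z, by simpa using h⟩
  choose n hn using hn
  have hsum : ∑ t, n t ≤ m := by
    simp only [hn] at hs
    exact_mod_cast hs
  refine ⟨⟨(∑ t, Multiset.replicate (n t) (some t)) +
    Multiset.replicate (m - ∑ t, n t) none, ?_⟩, ?_⟩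
  · simp [Multiset.card_sum]
    omega
  · funext t
    simp [Multiset.count_sum', Multiset.count_replicate, hn]

theorem points_ncard (m : ℕ) (l : ℕ → ℕ) (hl : ∀ j, l j ≤ m) (i : ℕ) :
    (latticePoints (simplexFamily l i)).ncard ≤ (i + 1 + m) ^ m := by
  refine (Set.ncard_le_ncard (points_subset m l hl i) (Set.finite_range _)).trans ?_
  rw [← Set.image_univ]
  refine (Set.ncard_image_le Set.finite_univ).trans ?_
  rw [Set.ncard_univ, Nat.card_eq_fintype_card, Sym.card_sym_eq_choose]
  refine (Nat.choose_le_pow _ _).trans ?_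
  apply Nat.pow_le_pow_left
  simp

/-- The information rates of the toric codes of the family of simplices
`conv{0, ℓ₀e₁, …, ℓ_i e_{i+1}}` tend to zero. -/
theorem stmt13 (q : ℕ) (hq : 3 ≤ q) (l : ℕ → ℕ) (hl : ∀ j, l j ≤ q - 2) :
    Filter.Tendsto
      (fun i => ((latticePoints (simplexFamily l i)).ncard : ℝ) / ((q : ℝ) - 1) ^ (i + 1))
      Filter.atTop (nhds 0) := by
  obtain ⟨m, rfl⟩ : ∃ m, q = m + 2 := ⟨q - 2, by omega⟩
  have hl' : ∀ j, l j ≤ m := fun j => by simpa using hl j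
  have hr : (1 : ℝ) < ((m + 2 : ℕ) : ℝ) - 1 := by
    have : (1 : ℝ) ≤ m := by exact_mod_cast (by omega : 1 ≤ m)
    push_cast
    linarith
  generalize ((m + 2 : ℕ) : ℝ) - 1 = r at hr
  have hr0 : 0 < r := by linarith
  have key := (((tendsto_pow_const_div_const_pow_of_one_lt m hr).comp
    (Filter.tendsto_add_atTop_nat (1 + m))).const_mul (r ^ m))
  rw [mul_zero] at key
  refine squeeze_zero (fun i => by positivity) (fun i => ?_) key
  have hb : ((latticePoints (simplexFamily l i)).ncard : ℝ) ≤ ((i : ℝ) + 1 + m) ^ m := by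
    exact_mod_cast points_ncard m l hl' i
  calc _ ≤ ((i : ℝ) + 1 + m) ^ m / r ^ (i + 1) := by gcongr
    _ = _ := by
      simp only [Function.comp_apply]
      push_cast
      rw [← add_assoc, ← add_assoc, pow_add r (i + 1) m]
      field_simp
end

section
/- Let q be a prime power and let (P_i) be a sequence of integral convex polytopes with P_i ⊆ [0,q−2]^{n_i}. Suppose the sequence (M(P_i)) is unbounded, i.e., for every N there exists i and a unimodular affine transformation A (A(x) = Mx + λ with M ∈ GL(n_i, ℤ) and λ ∈ ℤ^{n_i}) such that A([0,1]^N × {0}^{n_i−N}) ⊆ P_i. If the relative minimum distances δ(P_i) converge to a limit δ, then δ = 0. -/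
open MvPolynomial

/-- The unimodular affine map `x ↦ Mx + λ` applied over `ℝ`. -/
def affApply {n : ℕ} (M : Matrix (Fin n) (Fin n) ℤ) (lam : Fin n → ℤ)
    (x : Fin n → ℝ) : Fin n → ℝ :=
  fun i => (∑ j, (M i j : ℝ) * x j) + (lam i : ℝ)

/-- `M(P) ≥ N`: some unimodular affine image of the cube `[0,1]^N × {0}^(n-N)`
is contained in `P`. -/
def HasUnitCube {n : ℕ} (P : Set (Fin n → ℝ)) (N : ℕ) : Prop :=
  N ≤ n ∧ ∃ (M : Matrix (Fin n) (Fin n) ℤ) (lam : Fin n → ℤ), IsUnit M.det ∧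
    ∀ x : Fin n → ℝ,
      (∀ t : Fin n, ((t : ℕ) < N → 0 ≤ x t ∧ x t ≤ 1) ∧ (N ≤ (t : ℕ) → x t = 0)) →
      affApply M lam x ∈ P

lemma zpow_sum_aux {G ι : Type} [CommGroup G] (a : G) (s : Finset ι) (f : ι → ℤ) :
    a ^ (∑ t ∈ s, f t) = ∏ t ∈ s, a ^ f t := by
  classical
  induction s using Finset.induction_on with
  | empty => simp
  | insert x s hx ih => rw [Finset.sum_insert hx, Finset.prod_insert hx, zpow_add, ih]

noncomputable def phiMap {G : Type} [CommGroup G] {n : ℕ} (M : Matrix (Fin n) (Fin n) ℤ)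
    (u : Fin n → G) : Fin n → G := fun t => ∏ i, u i ^ (M i t)

lemma phiMap_inj {G : Type} [CommGroup G] {n : ℕ} (M : Matrix (Fin n) (Fin n) ℤ)
    (hM : IsUnit M.det) : Function.Injective (phiMap (G := G) M) := by
  have key : ∀ u : Fin n → G, phiMap M⁻¹ (phiMap M u) = u := by
    intro u
    funext j
    have h1 : M * M⁻¹ = 1 := Matrix.mul_nonsing_inv M hM
    unfold phiMap
    simp only [← Finset.prod_zpow, ← zpow_mul]
    rw [Finset.prod_comm]
    have : ∀ i, ∏ t, u i ^ (M i t * M⁻¹ t j) = u i ^ ((1 : Matrix (Fin n) (Fin n) ℤ) i j) := by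
      intro i
      rw [← h1, Matrix.mul_apply]
      exact (zpow_sum_aux _ _ _).symm
    simp only [this]
    rw [Finset.prod_eq_single j]
    · simp
    · intro b _ hb
      simp [Matrix.one_apply_ne hb]
    · simp
  intro u v h
  rw [← key u, h, key]

lemma torus_ncard_le {K : Type} [Field K] [Fintype K] {n : ℕ} (f : MvPolynomial (Fin n) K) :
    (torusZeros f).ncard ≤ (Fintype.card K - 1) ^ n := by
  classical
  have hsub : torusZeros f ⊆ Set.range (fun (u : Fin n → Kˣ) (i : Fin n) => (u i : K)) := by
    rintro a ⟨ha, -⟩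
    exact ⟨fun i => Units.mk0 (a i) (ha i), by funext i; simp⟩
  calc (torusZeros f).ncard ≤ _ := Set.ncard_le_ncard hsub (Set.toFinite _)
    _ ≤ Nat.card (Fin n → Kˣ) := by
      rw [← Set.image_univ]
      exact (Set.ncard_image_le Set.finite_univ).trans (by rw [Set.ncard_univ])
    _ = _ := by
      rw [Nat.card_eq_fintype_card, Fintype.card_fun, Fintype.card_units, Fintype.card_fin]

lemma NP_le {K : Type} [Field K] [Fintype K] {n : ℕ} (P : Set (Fin n → ℝ)) :
    NP K P ≤ (Fintype.card K - 1) ^ n := by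
  unfold NP maxTorusZeros
  by_cases h : {z | ∃ f : MvPolynomial (Fin n) K, f ≠ 0 ∧
    (↑f.support : Set (Fin n →₀ ℕ)) ⊆ latticeExps P ∧ z = (torusZeros f).ncard}.Nonempty
  · apply csSup_le h
    rintro z ⟨f, -, -, rfl⟩
    exact torus_ncard_le f
  · rw [Set.not_nonempty_iff_eq_empty] at h
    rw [h]; simp

lemma le_NP {K : Type} [Field K] [Fintype K] {n : ℕ} (P : Set (Fin n → ℝ))
    (f : MvPolynomial (Fin n) K) (hf : f ≠ 0)
    (hs : (↑f.support : Set (Fin n →₀ ℕ)) ⊆ latticeExps P) :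
    (torusZeros f).ncard ≤ NP K P := by
  unfold NP maxTorusZeros
  apply le_csSup
  · refine ⟨(Fintype.card K - 1) ^ n, ?_⟩
    rintro z ⟨f, -, -, rfl⟩
    exact torus_ncard_le f
  · exact ⟨f, hf, hs, rfl⟩

lemma count_good {G : Type} [CommGroup G] [Fintype G] {n N : ℕ} (hN : N ≤ n)
    (M : Matrix (Fin n) (Fin n) ℤ) (hM : IsUnit M.det) :
    {u : Fin n → G | ∀ t : Fin n, (t : ℕ) < N → phiMap M u t ≠ 1}.ncard
      = (Fintype.card G - 1) ^ N * (Fintype.card G) ^ (n - N) := by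
  classical
  have hinj := phiMap_inj (G := G) M hM
  have hsurj : Function.Surjective (phiMap (G := G) M) := Finite.surjective_of_injective hinj
  rw [← Set.ncard_image_of_injective _ hinj]
  have h1 : phiMap M '' {u : Fin n → G | ∀ t : Fin n, (t : ℕ) < N → phiMap M u t ≠ 1}
      = ↑(Fintype.piFinset (fun t : Fin n => if (t : ℕ) < N then
        (Finset.univ : Finset G).erase 1 else Finset.univ)) := by
    ext v
    obtain ⟨u, rfl⟩ := hsurj v
    rw [hinj.mem_set_image]
    simp only [Set.mem_ofPred_eq, Finset.mem_coe, Fintype.mem_piFinset]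
    refine forall_congr' fun t => ?_
    split_ifs with h <;> simp [h]
  rw [h1, Set.ncard_coe_finset, Fintype.card_piFinset]
  simp only [apply_ite Finset.card, Finset.card_erase_of_mem (Finset.mem_univ _), Finset.card_univ]
  rw [Finset.prod_ite, Finset.prod_const, Finset.prod_const]
  have h2 : (Finset.univ.filter (fun t : Fin n => (t : ℕ) < N)).card = N := by
    rw [Fin.card_filter_val_lt]; omega
  have h3 := Finset.card_filter_add_card_filter_not (s := (Finset.univ : Finset (Fin n)))
    (fun t : Fin n => (t : ℕ) < N)
  rw [h2, Finset.card_univ, Fintype.card_fin] at h3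
  rw [h2]
  congr 2
  omega

lemma exists_poly {K : Type} [Field K] [Fintype K] {n N : ℕ} (P : Set (Fin n → ℝ)) (q : ℕ)
    (hbox : InBox q P) (M : Matrix (Fin n) (Fin n) ℤ) (lam : Fin n → ℤ) (hM : IsUnit M.det)
    (hc : ∀ x : Fin n → ℝ,
      (∀ t : Fin n, ((t : ℕ) < N → 0 ≤ x t ∧ x t ≤ 1) ∧ (N ≤ (t : ℕ) → x t = 0)) →
      affApply M lam x ∈ P) :
    ∃ f : MvPolynomial (Fin n) K, f ≠ 0 ∧ (↑f.support : Set (Fin n →₀ ℕ)) ⊆ latticeExps P ∧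
      ∀ u : Fin n → Kˣ, (∃ t : Fin n, (t : ℕ) < N ∧ phiMap M u t = 1) →
        MvPolynomial.eval (fun i => (u i : K)) f = 0 := by
  classical
  set S : Finset (Fin n) := Finset.univ.filter (fun t : Fin n => (t : ℕ) < N) with hS
  let E : Finset (Fin n) → Fin n → ℤ := fun T i => (∑ t ∈ T, M i t) + lam i
  have hE : ∀ T ⊆ S, (fun i => (E T i : ℝ)) ∈ P := by
    intro T hT
    have := hc (fun t => if t ∈ T then 1 else 0) (by
      intro t
      refine ⟨fun _ => by split_ifs <;> simp, fun h => ?_⟩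
      rw [if_neg]
      intro ht
      have := hT ht
      simp [hS] at this
      omega)
    convert this using 1
    funext i
    simp [E, affApply]
  have hE0 : ∀ T ⊆ S, ∀ i, 0 ≤ E T i := by
    intro T hT i
    have := (hbox _ (hE T hT) i).1
    exact_mod_cast this
  let e : Finset (Fin n) → Fin n →₀ ℕ := fun T => Finsupp.equivFunOnFinite.symm
    (fun i => (E T i).toNat)
  have he : ∀ T ⊆ S, ∀ i, ((e T i : ℕ) : ℤ) = E T i := by
    intro T hT i
    simp [e, hE0 T hT i]
  have hMinj : Function.Injective M.mulVec := by
    exact Matrix.mulVec_injective_of_isUnit ((Matrix.isUnit_iff_isUnit_det M).2 hM)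
  have heinj : ∀ T ⊆ S, ∀ T' ⊆ S, e T = e T' → T = T' := by
    intro T hT T' hT' h
    have h1 : M.mulVec (fun t => if t ∈ T then 1 else 0)
        = M.mulVec (fun t => if t ∈ T' then 1 else 0) := by
      funext i
      have h2 := he T hT i
      rw [h, he T' hT' i] at h2
      simp only [E] at h2
      simp [Matrix.mulVec, dotProduct]
      linarith
    have h3 := hMinj h1
    ext t
    have h4 := congrFun h3 t
    by_cases a : t ∈ T <;> by_cases b : t ∈ T' <;> simp_all
  let f : MvPolynomial (Fin n) K := ∑ T ∈ S.powerset, MvPolynomial.monomial (e T) ((-1) ^ T.card)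
  have hcoeff : ∀ d, MvPolynomial.coeff d f
      = ∑ T ∈ S.powerset, if e T = d then (-1 : K) ^ T.card else 0 := by
    intro d
    simp [f, MvPolynomial.coeff_sum, MvPolynomial.coeff_monomial]
  refine ⟨f, ?_, ?_, ?_⟩
  · intro h0
    have h1 := hcoeff (e ∅)
    rw [h0, Finset.sum_eq_single ∅] at h1
    · simp at h1
    · intro T hT hne
      rw [if_neg]
      intro h
      exact hne (heinj T (Finset.mem_powerset.1 hT) ∅ (by simp) h)
    · simp
  · intro d hd
    have h1 : MvPolynomial.coeff d f ≠ 0 := by simpa using hd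
    rw [hcoeff] at h1
    obtain ⟨T, hT, h2⟩ := Finset.exists_ne_zero_of_sum_ne_zero h1
    have h3 : e T = d := by
      by_contra h
      simp [h] at h2
    have hT' := Finset.mem_powerset.1 hT
    subst h3
    have := hE T hT'
    unfold latticeExps
    simp only [Set.mem_ofPred_eq]
    convert this using 2 with i
    exact_mod_cast he T hT' i
  · rintro u ⟨t, htN, ht⟩
    have h1 : ∀ T ∈ S.powerset, MvPolynomial.eval (fun i => (u i : K))
        (MvPolynomial.monomial (e T) ((-1 : K) ^ T.card))
        = ((∏ i, u i ^ lam i : Kˣ) : K) * ∏ t ∈ T, (-((phiMap M u t : Kˣ) : K)) := by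
      intro T hT
      have hT' := Finset.mem_powerset.1 hT
      rw [MvPolynomial.eval_monomial, Finsupp.prod_fintype _ _ (by simp)]
      have h2 : ∏ i, ((u i : K)) ^ (e T i) = ((∏ i, u i ^ E T i : Kˣ) : K) := by
        rw [Units.coe_prod]
        refine Finset.prod_congr rfl fun i _ => ?_
        rw [← he T hT' i, zpow_natCast, Units.val_pow_eq_pow_val]
      have h3 : ∏ i, u i ^ E T i = (∏ i, u i ^ lam i) * ∏ t ∈ T, phiMap M u t := by
        unfold phiMap
        rw [Finset.prod_comm, ← Finset.prod_mul_distrib]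
        refine Finset.prod_congr rfl fun i _ => ?_
        simp only [E]
        rw [zpow_add, mul_comm]
        congr 1
        exact zpow_sum_aux _ _ _
      rw [h2, h3, Units.val_mul, Units.coe_prod _ T, Finset.prod_neg]
      ring
    rw [map_sum, Finset.sum_congr rfl h1, ← Finset.mul_sum, ← Finset.prod_one_add]
    rw [Finset.prod_eq_zero (i := t) (by simp [hS, htN]) (by simp [ht]), mul_zero]

lemma delta_le {K : Type} [Field K] [Fintype K] {n N : ℕ} (P : Set (Fin n → ℝ)) (q : ℕ)
    (hbox : InBox q P) (hc : HasUnitCube P N) :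
    deltaP K P ≤ (((Fintype.card K : ℝ) - 2) / ((Fintype.card K : ℝ) - 1)) ^ N := by
  classical
  obtain ⟨hN, M, lam, hM, hc⟩ := hc
  obtain ⟨f, hf, hs, hz⟩ := exists_poly (K := K) P q hbox M lam hM hc
  have h1 := le_NP P f hf hs
  have hg := count_good (G := Kˣ) hN M hM
  set A := {u : Fin n → Kˣ | ∀ t : Fin n, (t : ℕ) < N → phiMap M u t ≠ 1} with hA
  have h2 : Aᶜ.ncard ≤ (torusZeros f).ncard := by
    refine Set.ncard_le_ncard_of_injOn (fun (u : Fin n → Kˣ) (i : Fin n) => (u i : K)) ?_ ?_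
      (Set.toFinite _)
    · intro u hu
      refine ⟨fun i => (u i).ne_zero, hz u ?_⟩
      simpa [hA] using hu
    · intro u _ v _ h
      funext i
      exact Units.ext (congrFun h i)
  have h3 := Set.ncard_add_ncard_compl A
  rw [Nat.card_eq_fintype_card, Fintype.card_fun, Fintype.card_fin, hg, Fintype.card_units] at h3
  have hq : 2 ≤ Fintype.card K := Fintype.one_lt_card
  obtain ⟨r, hr⟩ := Nat.exists_eq_add_of_le hq
  unfold deltaP
  rw [hr] at h3 ⊢
  have e1 : 2 + r - 1 = r + 1 := by omega
  rw [e1, Nat.add_sub_cancel] at h3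
  have h4 : ((r : ℝ) + 1) ^ n ≤ (r : ℝ) ^ N * (r + 1) ^ (n - N) + NP K P := by
    exact_mod_cast (by omega : (r + 1) ^ n ≤ r ^ N * (r + 1) ^ (n - N) + NP K P)
  have e2 : ((2 + r : ℕ) : ℝ) - 1 = r + 1 := by push_cast; ring
  have e3 : ((2 + r : ℕ) : ℝ) - 2 = r := by push_cast; ring
  rw [e2, e3, div_le_iff₀ (by positivity), div_pow]
  have e4 : ((r : ℝ) + 1) ^ n = (r + 1) ^ N * (r + 1) ^ (n - N) := by
    rw [← pow_add]; congr 1; omega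
  have e5 : (r : ℝ) ^ N / (r + 1) ^ N * (r + 1) ^ n = r ^ N * (r + 1) ^ (n - N) := by
    rw [e4]; field_simp
  rw [e5]; linarith

lemma delta_nonneg {K : Type} [Field K] [Fintype K] {n : ℕ} (P : Set (Fin n → ℝ)) :
    0 ≤ deltaP K P := by
  have hq : 1 < Fintype.card K := Fintype.one_lt_card
  have h := NP_le (K := K) P
  have h' : (NP K P : ℝ) ≤ ((Fintype.card K : ℝ) - 1) ^ n := by
    rw [← Nat.cast_one, ← Nat.cast_sub hq.le]
    exact_mod_cast h
  have : (1 : ℝ) < Fintype.card K := by exact_mod_cast hq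
  unfold deltaP
  exact div_nonneg (by linarith) (pow_nonneg (by linarith) _)

/-- If the polytopes of an infinite family contain unimodular unit hypercubes of
unbounded dimension, then the limit of the relative minimum distances is `0`. -/
theorem stmt15 (K : Type) [Field K] [Fintype K] (q : ℕ) (hq : Fintype.card K = q)
    (n : ℕ → ℕ) (P : ∀ i, Set (Fin (n i) → ℝ))
    (hpoly : ∀ i, IsIntegralPolytope (P i)) (hbox : ∀ i, InBox q (P i))
    (hM : ∀ N, ∃ i, HasUnitCube (P i) N)
    (δ : ℝ)
    (hδ : Filter.Tendsto (fun i => deltaP K (P i)) Filter.atTop (nhds δ)) :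
    δ = 0 := by
  have hq1 : 2 ≤ Fintype.card K := Fintype.one_lt_card
  have hq2 : (2 : ℝ) ≤ Fintype.card K := by exact_mod_cast hq1
  set r : ℝ := ((Fintype.card K : ℝ) - 2) / ((Fintype.card K : ℝ) - 1) with hr
  have hr0 : 0 ≤ r := div_nonneg (by linarith) (by linarith)
  have hr1 : r < 1 := by
    rw [hr, div_lt_one (by linarith)]; linarith
  have hge : 0 ≤ δ := ge_of_tendsto' hδ fun i => delta_nonneg (K := K) (P i)
  have hle : ∀ N : ℕ, δ ≤ r ^ N := by
    intro N
    refine le_of_tendsto_of_frequently hδ ?_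
    rw [Filter.frequently_atTop]
    intro m
    obtain ⟨i, hi⟩ := hM (N + (∑ j ∈ Finset.range m, n j) + 1)
    refine ⟨i, ?_, ?_⟩
    · by_contra hlt
      have h1 := Finset.single_le_sum (f := n) (fun j _ => Nat.zero_le _)
        (Finset.mem_range.2 (not_le.1 hlt))
      have := hi.1
      omega
    · exact (delta_le (P i) q (hbox i) hi).trans
        (pow_le_pow_of_le_one hr0 hr1.le (by omega))
  exact le_antisymm (ge_of_tendsto' (tendsto_pow_atTop_nhds_zero_of_lt_one hr0 hr1) hle) hge
end

section
/- Let q be a prime power and let (P_i) be a sequence of integral convex polytopes with P_i ⊆ [0,q−2]^{n_i}. Then the sequence (M(P_i)) is unbounded if and only if the sequence (L(P_i)) of full Minkowski lengths is unbounded. That is: (for every N there exists i with M(P_i) ≥ N) if and only if (for every N there exists i with L(P_i) ≥ N). -/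
open Pointwise

/-- A lattice polytope of positive dimension: an integral convex polytope that is
not a single point. -/
def IsPosDimLatticePolytope {n : ℕ} (Q : Set (Fin n → ℝ)) : Prop :=
  IsIntegralPolytope Q ∧ ¬ Q.Subsingleton

/-- `L(P) ≥ N`: some lattice subpolytope of `P` is the Minkowski sum of at least `N`
lattice polytopes of positive dimension. -/
def HasMinkowskiLength {n : ℕ} (P : Set (Fin n → ℝ)) (N : ℕ) : Prop :=
  ∃ Q : Set (Fin n → ℝ), Q ⊆ P ∧ IsIntegralPolytope Q ∧
    ∃ l : ℕ, N ≤ l ∧ ∃ Qs : Fin l → Set (Fin n → ℝ),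
      (∀ j, IsPosDimLatticePolytope (Qs j)) ∧ Q = ∑ j, Qs j

/-- The inclusion of lattice points in real space. -/
def latCast {n : ℕ} (v : Fin n → ℤ) : Fin n → ℝ := fun i => (v i : ℝ)

lemma latCast_add {n : ℕ} (v w : Fin n → ℤ) : latCast (v + w) = latCast v + latCast w := by
  ext i; simp [latCast]

lemma integral_segment {n : ℕ} (a b : Fin n → ℤ) :
    IsIntegralPolytope (segment ℝ (latCast a) (latCast b)) := by
  classical
  refine ⟨{a, b}, by simp, ?_⟩
  rw [← convexHull_pair]
  congr 1
  simp [Set.image_pair]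
  rfl

lemma integral_zero {n : ℕ} : IsIntegralPolytope (0 : Set (Fin n → ℝ)) := by
  refine ⟨{0}, by simp, ?_⟩
  simp
  rfl

lemma integral_add {n : ℕ} {A B : Set (Fin n → ℝ)} (hA : IsIntegralPolytope A)
    (hB : IsIntegralPolytope B) : IsIntegralPolytope (A + B) := by
  classical
  obtain ⟨V, hV, rfl⟩ := hA
  obtain ⟨W, hW, rfl⟩ := hB
  refine ⟨V + W, hV.add hW, ?_⟩
  rw [← convexHull_add]
  congr 1
  rw [Finset.coe_add]
  ext x
  simp only [Set.mem_add, Set.mem_image]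
  constructor
  · rintro ⟨_, ⟨v, hv, rfl⟩, _, ⟨w, hw, rfl⟩, rfl⟩
    exact ⟨v + w, ⟨v, hv, w, hw, rfl⟩, latCast_add v w⟩
  · rintro ⟨_, ⟨v, hv, w, hw, rfl⟩, rfl⟩
    exact ⟨_, ⟨v, hv, rfl⟩, _, ⟨w, hw, rfl⟩, (latCast_add v w).symm⟩

lemma cube_to_minkowski {n : ℕ} {P : Set (Fin n → ℝ)} {N : ℕ} (h : HasUnitCube P (N + 1)) :
    HasMinkowskiLength P (N + 1) := by
  obtain ⟨hN, M, lam, hM, hc⟩ := h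
  let a : Fin (N + 1) → (Fin n → ℤ) := fun j => if j = 0 then lam else 0
  let v : Fin (N + 1) → (Fin n → ℤ) := fun j i => M i (Fin.castLE hN j)
  let Qs : Fin (N + 1) → Set (Fin n → ℝ) := fun j =>
    segment ℝ (latCast (a j)) (latCast (a j + v j))
  have hQs : ∀ j, IsIntegralPolytope (Qs j) := fun j => integral_segment _ _
  refine ⟨∑ j, Qs j, ?_, ?_, N + 1, le_rfl, Qs, ?_, rfl⟩
  · intro y hy
    rw [Set.mem_fintype_sum] at hy
    obtain ⟨g, hg, rfl⟩ := hy
    have h1 : ∀ j, ∃ t : ℝ, (0 ≤ t ∧ t ≤ 1) ∧ g j = latCast (a j) + t • latCast (v j) := by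
      intro j
      have h2 := hg j
      simp only [Qs] at h2
      rw [segment_eq_image'] at h2
      obtain ⟨t, ht, h3⟩ := h2
      refine ⟨t, ht, h3.symm.trans ?_⟩
      simp [latCast_add]
    choose t ht hgt using h1
    have key := hc (fun k => if h : (k : ℕ) < N + 1 then t ⟨k, h⟩ else 0) (by
      intro k
      refine ⟨fun h => ?_, fun h => ?_⟩
      · simpa [h] using ht ⟨k, h⟩
      · simp [Nat.not_lt.2 h])
    convert key using 1
    ext i
    simp only [affApply, Finset.sum_apply, hgt, Pi.add_apply, Pi.smul_apply, smul_eq_mul,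
      Finset.sum_add_distrib]
    rw [add_comm]
    congr 1
    · refine Fintype.sum_of_injective (Fin.castLE hN) (Fin.castLE_injective hN) _ _ ?_ ?_
      · intro k hk
        have : ¬ ((k : ℕ) < N + 1) := fun h => hk ⟨⟨k, h⟩, rfl⟩
        simp [this]
      · intro j
        have hj : ((Fin.castLE hN j : Fin n) : ℕ) < N + 1 := j.2
        rw [dif_pos hj, mul_comm]
        rfl
    · rw [Finset.sum_eq_single 0]
      · simp [a, latCast]
      · intro b _ hb
        simp [a, hb, latCast]
      · simp
  · exact Finset.sum_induction Qs IsIntegralPolytope (fun _ _ => integral_add) integral_zero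
      (fun j _ => hQs j)
  · intro j
    refine ⟨hQs j, fun hs => ?_⟩
    have h1 := hs (left_mem_segment ℝ _ _) (right_mem_segment ℝ _ _)
    have h2 : ∀ i, M i (Fin.castLE hN j) = 0 := by
      intro i
      have := congrFun h1 i
      simpa [latCast, v] using this
    rw [Matrix.det_eq_zero_of_column_eq_zero _ h2] at hM
    simp at hM

/-- A finite integer vector family with a triangular dual system extends to a unimodular matrix. -/
lemma extend_unimodular {n N : ℕ} (w : Fin N → (Fin n → ℤ)) (φ : Fin N → ((Fin n → ℤ) →ₗ[ℤ] ℤ))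
    (h1 : ∀ a, φ a (w a) = 1) (h0 : ∀ a b, a < b → φ a (w b) = 0) :
    ∃ hN : N ≤ n, ∃ M : Matrix (Fin n) (Fin n) ℤ, IsUnit M.det ∧
      ∀ a i, M i (Fin.castLE hN a) = w a i := by
  classical
  let C : Matrix (Fin N) (Fin N) ℤ := fun a b => φ a (w b)
  have hC : C.det = 1 := by
    rw [Matrix.det_of_lowerTriangular C (fun i j hij => h0 _ _ hij)]
    simp [C, h1]
  have hCu : IsUnit C.det := by rw [hC]; exact isUnit_one
  let W : (Fin N → ℤ) →ₗ[ℤ] (Fin n → ℤ) := Fintype.linearCombination ℤ w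
  let Φ : (Fin n → ℤ) →ₗ[ℤ] (Fin N → ℤ) := LinearMap.pi φ
  let r : (Fin n → ℤ) →ₗ[ℤ] (Fin N → ℤ) := (Matrix.toLin' C⁻¹).comp Φ
  have hΦW : ∀ x, Φ (W x) = C.mulVec x := by
    intro x
    ext a
    simp only [Φ, W, Fintype.linearCombination_apply, Matrix.mulVec, dotProduct, C,
      LinearMap.pi_apply, map_sum, map_smul, smul_eq_mul]
    exact Finset.sum_congr rfl fun _ _ => mul_comm _ _
  have hrW : ∀ x, r (W x) = x := by
    intro x
    simp only [r, LinearMap.comp_apply, hΦW, Matrix.toLin'_apply, Matrix.mulVec_mulVec]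
    rw [Matrix.nonsing_inv_mul _ hCu, Matrix.one_mulVec]
  let F : ((Fin N → ℤ) × LinearMap.ker r) →ₗ[ℤ] (Fin n → ℤ) :=
    LinearMap.coprod W (LinearMap.ker r).subtype
  have hF : Function.Bijective F := by
    constructor
    · rw [← LinearMap.ker_eq_bot, LinearMap.ker_eq_bot']
      rintro ⟨x, k⟩ hx
      simp only [F, LinearMap.coprod_apply, Submodule.subtype_apply] at hx
      have h2 : x = 0 := by
        have := congrArg r hx
        rw [map_add, hrW, LinearMap.mem_ker.1 k.2] at this
        simpa using this
      subst h2
      have : k = 0 := by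
        ext1
        simpa using hx
      rw [this]; rfl
    · intro y
      refine ⟨(r y, ⟨y - W (r y), ?_⟩), ?_⟩
      · rw [LinearMap.mem_ker, map_sub, hrW, sub_self]
      · simp [F]
  let E := LinearEquiv.ofBijective F hF
  let m := Module.finrank ℤ (LinearMap.ker r)
  let bk : Module.Basis (Fin m) ℤ (LinearMap.ker r) := Module.finBasis ℤ (LinearMap.ker r)
  let b0 : Module.Basis (Fin N ⊕ Fin m) ℤ (Fin n → ℤ) :=
    ((Pi.basisFun ℤ (Fin N)).prod bk).map E
  have hcard : N + m = n := by
    have h2 := Module.finrank_eq_card_basis b0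
    simp at h2
    exact h2.symm
  let b : Module.Basis (Fin n) ℤ (Fin n → ℤ) :=
    b0.reindex (finSumFinEquiv.trans (finCongr hcard))
  have hN : N ≤ n := by omega
  refine ⟨hN, (Pi.basisFun ℤ (Fin n)).toMatrix b, ?_, ?_⟩
  · have := (Pi.basisFun ℤ (Fin n)).isUnit_det b
    rwa [Module.Basis.det_apply] at this
  · intro a i
    have h3 : (finSumFinEquiv.trans (finCongr hcard)).symm (Fin.castLE hN a) = Sum.inl a := by
      rw [Equiv.symm_apply_eq]
      ext
      simp
    rw [Module.Basis.toMatrix_apply]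
    simp only [b, Module.Basis.reindex_apply, h3]
    simp [b0, E, F, W, Fintype.linearCombination_apply, Pi.single_apply]

lemma greedy {ι : Type*} [DecidableEq ι] (c : ι → ι → ℤ) (K : ℕ) (hK : 0 < K) (N : ℕ) :
    ∀ S : Finset ι, (∀ j ∈ S, c j j = 1) → (∀ j, (S.filter (fun k => c j k ≠ 0)).card ≤ K) →
      N * K ≤ S.card → ∃ e : Fin N → ι, (∀ a, e a ∈ S) ∧ ∀ a b, a < b → c (e a) (e b) = 0 := by
  induction N with
  | zero => intro S _ _ _; exact ⟨Fin.elim0, fun a => a.elim0, fun a => a.elim0⟩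
  | succ N ih =>
    intro S hd hb hS
    have hne : 0 < S.card := by nlinarith
    obtain ⟨j, hj⟩ := Finset.card_pos.1 hne
    have hsplit := Finset.card_filter_add_card_filter_not (s := S) (fun k => c j k ≠ 0)
    have hbj := hb j
    obtain ⟨e, he, hlt⟩ := ih (S.filter (fun k => ¬ (c j k ≠ 0)))
      (fun k hk => hd k (Finset.mem_filter.1 hk).1)
      (fun k => (Finset.card_le_card
        (Finset.filter_subset_filter _ (Finset.filter_subset _ _))).trans (hb k))
      (by rw [Nat.succ_mul] at hS; omega)
    refine ⟨Fin.cons j e, ?_, ?_⟩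
    · intro a
      refine Fin.cases ?_ (fun a => ?_) a
      · simpa using hj
      · simpa using (Finset.mem_filter.1 (he a)).1
    · intro a b
      refine Fin.cases ?_ (fun b => ?_) b
      · intro h; exact absurd h (Fin.not_lt_zero a)
      · refine Fin.cases ?_ (fun a => ?_) a
        · intro _
          simpa using (Finset.mem_filter.1 (he b)).2
        · intro h
          simpa using hlt a b (Fin.succ_lt_succ_iff.1 h)

lemma posdim_segment {n : ℕ} {Q : Set (Fin n → ℝ)} (h : IsPosDimLatticePolytope Q) :
    ∃ a p c : Fin n → ℤ, ∑ i, c i * p i = 1 ∧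
      ∀ t : ℝ, 0 ≤ t → t ≤ 1 → latCast a + t • latCast p ∈ Q := by
  obtain ⟨⟨V, hV, rfl⟩, hns⟩ := h
  have h2 : ∃ a ∈ V, ∃ b ∈ V, a ≠ b := by
    by_contra! hcon
    apply hns
    obtain ⟨a, ha⟩ := hV
    have : V = {a} := Finset.eq_singleton_iff_unique_mem.2 ⟨ha, fun b hb => hcon b hb a ha⟩
    rw [this]
    simp
  obtain ⟨a, ha, b, hb, hab⟩ := h2
  have hex : ∃ i, (b - a) i ≠ 0 := by
    by_contra! hcon
    exact hab (by ext i; have := hcon i; simp at this; omega)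
  obtain ⟨i0, hi0⟩ := hex
  obtain ⟨p, hp, hg⟩ := Finset.extract_gcd (b - a) (s := Finset.univ) ⟨i0, Finset.mem_univ _⟩
  set g : ℤ := Finset.univ.gcd (b - a) with hgdef
  have hg0 : g ≠ 0 := by
    intro h0
    apply hi0
    rw [hp i0 (Finset.mem_univ _), h0, zero_mul]
  have hgn : 0 ≤ g := by
    have : normalize g = g := Finset.normalize_gcd
    rw [← this]
    exact Int.nonneg_iff_normalize_eq_self _ |>.1 (normalize_idem g)
  have hg1 : (1 : ℝ) ≤ g := by exact_mod_cast (by omega : 1 ≤ g)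
  obtain ⟨c, hc⟩ : ∃ c : Fin n → ℤ, ∑ i, c i * p i = 1 := by
    obtain ⟨c, hc⟩ := Finset.gcd_eq_sum_mul Finset.univ p
    exact ⟨c, by rw [← hg, hc]; exact Finset.sum_congr rfl fun _ _ => mul_comm _ _⟩
  refine ⟨a, p, c, hc, fun t ht0 ht1 => ?_⟩
  have hA := subset_convexHull ℝ _ (Set.mem_image_of_mem
    (fun (v : Fin n → ℤ) (i : Fin n) => (v i : ℝ)) (Finset.mem_coe.2 ha))
  have hB := subset_convexHull ℝ _ (Set.mem_image_of_mem
    (fun (v : Fin n → ℤ) (i : Fin n) => (v i : ℝ)) (Finset.mem_coe.2 hb))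
  apply (convex_convexHull ℝ _).segment_subset hA hB
  rw [segment_eq_image']
  refine ⟨t / g, ⟨by positivity, ?_⟩, ?_⟩
  · rw [div_le_one (by linarith)]; linarith
  · ext i
    have h3 : ((b i : ℝ) - a i) = g * p i := by
      have := hp i (Finset.mem_univ _)
      simp only [Pi.sub_apply] at this
      exact_mod_cast this
    simp only [Pi.add_apply, Pi.smul_apply, Pi.sub_apply, smul_eq_mul, h3, latCast]
    field_simp

/-- A functional equal to one on `p j` and vanishing on all but boundedly many `p k`. -/
lemma sparse_functional {n l D : ℕ} (p : Fin l → (Fin n → ℤ))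
    (hsum : ∀ i, ∑ j, |p j i| ≤ (D : ℤ)) (j : Fin l) (c : Fin n → ℤ)
    (hc : ∑ i, c i * p j i = 1) :
    ∃ φ : (Fin n → ℤ) →ₗ[ℤ] ℤ, φ (p j) = 1 ∧
      (Finset.univ.filter (fun k => φ (p k) ≠ 0)).card ≤ (2 * D + 1) * D := by
  classical
  have habs : ∀ k i, |p k i| ≤ D := fun k i =>
    (Finset.single_le_sum (f := fun k => |p k i|) (fun _ _ => abs_nonneg _)
      (Finset.mem_univ k)).trans (hsum i)
  have hrow : ∀ i, (Finset.univ.filter (fun k => p k i ≠ 0)).card ≤ D := by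
    intro i
    have h1 : ((Finset.univ.filter (fun k => p k i ≠ 0)).card : ℤ) ≤ ∑ k, |p k i| := by
      rw [Finset.card_filter]
      push_cast
      apply Finset.sum_le_sum
      intro k _
      split_ifs with h
      · exact Int.one_le_abs h
      · exact abs_nonneg _
    exact_mod_cast h1.trans (hsum i)
  -- representative of the fibre of `p j`
  have hrep : ∃ ρ : ℤ → Fin n, ∀ i, p j (ρ (p j i)) = p j i := by
    have hn : Nonempty (Fin n) := by
      by_contra h
      rw [not_nonempty_iff] at h
      simp at hc
    exact ⟨Function.invFun (p j), fun i => Function.invFun_eq ⟨i, rfl⟩⟩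
  obtain ⟨ρ, hρ⟩ := hrep
  let φ : (Fin n → ℤ) →ₗ[ℤ] ℤ := ∑ i, c i • LinearMap.proj (ρ (p j i))
  have hφ : ∀ x, φ x = ∑ i, c i * x (ρ (p j i)) := by intro x; simp [φ]
  refine ⟨φ, by rw [hφ]; simpa [hρ] using hc, ?_⟩
  have hsub : Finset.univ.filter (fun k => φ (p k) ≠ 0) ⊆
      (Finset.Icc (-(D : ℤ)) D).biUnion
        (fun z => Finset.univ.filter (fun k => p k (ρ z) ≠ 0)) := by
    intro k hk
    rw [Finset.mem_filter, hφ] at hk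
    obtain ⟨i, _, hi⟩ := Finset.exists_ne_zero_of_sum_ne_zero hk.2
    rw [Finset.mem_biUnion]
    refine ⟨p j i, Finset.mem_Icc.2 (abs_le.1 (habs j i)), ?_⟩
    simpa using right_ne_zero_of_mul hi
  refine (Finset.card_le_card hsub).trans ((Finset.card_biUnion_le_card_mul _ _ D
    (fun z _ => hrow _)).trans ?_)
  rw [Int.card_Icc]
  apply Nat.mul_le_mul_right
  omega

lemma minkowski_to_cube {q n : ℕ} {P : Set (Fin n → ℝ)} (hbox : InBox q P) (N : ℕ)
    (h : HasMinkowskiLength P (N * ((2 * q + 1) * q + 1))) : HasUnitCube P N := by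
  classical
  obtain ⟨Q, hQP, -, l, hl, Qs, hQs, rfl⟩ := h
  choose a p c hc hmem using fun j => posdim_segment (hQs j)
  have hP : ∀ t : Fin l → ℝ, (∀ j, 0 ≤ t j ∧ t j ≤ 1) →
      ∑ j, (latCast (a j) + t j • latCast (p j)) ∈ P := fun t ht =>
    hQP (Set.finsetSum_mem_finsetSum _ _ _ (fun j _ => hmem j (t j) (ht j).1 (ht j).2))
  have hsum : ∀ i, ∑ j, |p j i| ≤ (q : ℤ) := by
    intro i
    have h1 := (hbox _ (hP (fun j => if 0 ≤ p j i then 1 else 0)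
      (fun j => by split_ifs <;> norm_num)) i).2
    have h2 := (hbox _ (hP (fun j => if 0 ≤ p j i then 0 else 1)
      (fun j => by split_ifs <;> norm_num)) i).1
    have h3 : ((∑ j, |p j i| : ℤ) : ℝ) =
        (∑ j, (latCast (a j) + (if 0 ≤ p j i then (1 : ℝ) else 0) • latCast (p j))) i -
        (∑ j, (latCast (a j) + (if 0 ≤ p j i then (0 : ℝ) else 1) • latCast (p j))) i := by
      rw [Finset.sum_apply, Finset.sum_apply, ← Finset.sum_sub_distrib]
      push_cast
      apply Finset.sum_congr rfl
      intro j _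
      by_cases hj : 0 ≤ p j i
      · have : (0 : ℝ) ≤ p j i := by exact_mod_cast hj
        simp [hj, latCast, abs_of_nonneg this]
      · have : (p j i : ℝ) ≤ 0 := by exact_mod_cast (not_le.1 hj).le
        simp [hj, latCast, abs_of_nonpos this]
    have h4 : ((∑ j, |p j i| : ℤ) : ℝ) ≤ (q : ℝ) := by rw [h3]; linarith
    exact_mod_cast h4
  choose φ hφ1 hφc using fun j => sparse_functional p hsum j (c j) (hc j)
  obtain ⟨e, -, he⟩ := greedy (fun j k => φ j (p k)) ((2 * q + 1) * q + 1) (Nat.succ_pos _) N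
    Finset.univ (fun j _ => hφ1 j) (fun j => (hφc j).trans (Nat.le_succ _)) (by simpa using hl)
  have hinj : Function.Injective e := by
    have hne : ∀ x y, x < y → e x ≠ e y := by
      intro x y hxy hxy'
      have h1 := he x y hxy
      simp only [← hxy', hφ1] at h1
      exact one_ne_zero h1
    intro x y hxy
    rcases lt_trichotomy x y with h | h | h
    · exact absurd hxy (hne _ _ h)
    · exact h
    · exact absurd hxy.symm (hne _ _ h)
  obtain ⟨hN, M, hM, hMw⟩ := extend_unimodular (fun x => p (e x)) (fun x => φ (e x))
    (fun x => hφ1 _) he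
  refine ⟨hN, M, ∑ j, a j, hM, fun x hx => ?_⟩
  have hext : ∀ k, Function.extend e (fun b => x (Fin.castLE hN b)) 0 (e k)
      = x (Fin.castLE hN k) := fun k => hinj.extend_apply _ _ k
  have hext0 : ∀ j, j ∉ Set.range e → Function.extend e (fun b => x (Fin.castLE hN b)) 0 j = 0 :=
    fun j hj => Function.extend_apply' _ _ _ hj
  have key := hP (Function.extend e (fun b => x (Fin.castLE hN b)) 0) (by
    intro j
    by_cases hj : j ∈ Set.range e
    · obtain ⟨k, rfl⟩ := hj
      rw [hext]
      exact (hx _).1 k.2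
    · rw [hext0 j hj]; norm_num)
  convert key using 1
  ext i
  simp only [affApply, Finset.sum_apply, Pi.add_apply, Pi.smul_apply, smul_eq_mul,
    Finset.sum_add_distrib]
  rw [add_comm]
  congr 1
  · simp [latCast]
  · trans ∑ k : Fin N, x (Fin.castLE hN k) * (p (e k) i : ℝ)
    · symm
      refine Fintype.sum_of_injective (Fin.castLE hN) (Fin.castLE_injective hN) _ _ ?_ ?_
      · intro k hk
        rw [(hx k).2 (Nat.not_lt.1 fun h => hk ⟨⟨k, h⟩, rfl⟩), mul_zero]
      · intro k
        rw [hMw, mul_comm]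
    · refine Fintype.sum_of_injective e hinj _ _ ?_ ?_
      · intro j hj
        rw [hext0 j hj, zero_mul]
      · intro k
        rw [hext]; rfl

/-- For an infinite family of toric codes, the sequence `M(P_i)` (largest unimodular
unit hypercube dimension) is unbounded iff the sequence `L(P_i)` (full Minkowski
length) is unbounded. -/
theorem stmt16 (q : ℕ) (hq : IsPrimePow q) (n : ℕ → ℕ) (P : ∀ i, Set (Fin (n i) → ℝ))
    (hpoly : ∀ i, IsIntegralPolytope (P i)) (hbox : ∀ i, InBox q (P i)) :
    (∀ N, ∃ i, HasUnitCube (P i) N) ↔ (∀ N, ∃ i, HasMinkowskiLength (P i) N) := by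
  constructor
  · intro h N
    obtain ⟨i, hi⟩ := h (N + 1)
    obtain ⟨Q, h1, h2, l, hl, h3⟩ := cube_to_minkowski hi
    exact ⟨i, Q, h1, h2, l, by omega, h3⟩
  · intro h N
    obtain ⟨i, hi⟩ := h (N * ((2 * q + 1) * q + 1))
    exact ⟨i, minkowski_to_cube (hbox i) N hi⟩
end

section
/- Let q ≥ 3 be a prime power and let (P_i) be a sequence of integral convex polytopes with P_i ⊆ [0,q−2]^{n_i} and n_i → ∞. If there exists N such that the full Minkowski length satisfies L(P_i) ≤ q−3 for all i ≥ N, then the information rates tend to zero: R(P_i) = |P_i ∩ ℤ^{n_i}|/(q−1)^{n_i} → 0 as i → ∞. -/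
open Pointwise

theorem segInt {n : ℕ} (a b : Fin n → ℤ) :
    IsIntegralPolytope (segment ℝ (fun i => (a i : ℝ)) (fun i => (b i : ℝ))) := by
  classical
  refine ⟨{a, b}, by simp, ?_⟩
  rw [← convexHull_pair]
  simp [Set.image_insert_eq]

theorem segPos {n : ℕ} (a b : Fin n → ℤ) (h : a ≠ b) :
    IsPosDimLatticePolytope (segment ℝ (fun i => (a i : ℝ)) (fun i => (b i : ℝ))) := by
  refine ⟨segInt a b, fun hs => h ?_⟩
  have := hs (left_mem_segment ℝ _ _) (right_mem_segment ℝ _ _)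
  funext i
  have := congrFun this i
  simpa using this

theorem segAdd {E : Type*} [AddCommGroup E] [Module ℝ E] (a c : E) (k : ℕ) :
    segment ℝ a (a + ((k : ℝ) + 1) • c) + segment ℝ 0 c
      = segment ℝ a (a + ((k : ℝ) + 1 + 1) • c) := by
  have hk : (0 : ℝ) < (k : ℝ) + 1 := by positivity
  ext x
  simp only [Set.mem_add, segment_eq_image', Set.mem_image, add_sub_cancel_left, sub_zero, zero_add]
  constructor
  · rintro ⟨_, ⟨s, ⟨hs0, hs1⟩, rfl⟩, _, ⟨t, ⟨ht0, ht1⟩, rfl⟩, rfl⟩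
    refine ⟨(s * ((k : ℝ) + 1) + t) / ((k : ℝ) + 1 + 1), ⟨by positivity, ?_⟩, ?_⟩
    · rw [div_le_one (by positivity)]
      nlinarith
    · rw [smul_smul, div_mul_cancel₀ _ (by positivity)]
      module
  · rintro ⟨t, ⟨ht0, ht1⟩, rfl⟩
    refine ⟨_, ⟨t, ⟨ht0, ht1⟩, rfl⟩, _, ⟨t, ⟨ht0, ht1⟩, rfl⟩, ?_⟩
    module

theorem segSum {E : Type*} [AddCommGroup E] [Module ℝ E] (a c : E) (k : ℕ) :
    segment ℝ a (a + c) + k • segment ℝ 0 c = segment ℝ a (a + ((k : ℝ) + 1) • c) := by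
  induction k with
  | zero => simp
  | succ k ih =>
    rw [succ_nsmul, ← add_assoc, ih, segAdd]
    push_cast
    rfl

theorem hasLen {n : ℕ} (P : Set (Fin n → ℝ)) (hP : Convex ℝ P) (k : ℕ) (a c : Fin n → ℤ)
    (hc : c ≠ 0) (ha : (fun i => (a i : ℝ)) ∈ P)
    (hb : (fun i => ((a i + ((k : ℤ) + 1) * c i : ℤ) : ℝ)) ∈ P) :
    HasMinkowskiLength P (k + 1) := by
  refine ⟨_, hP.segment_subset ha hb, segInt a (fun i => a i + ((k : ℤ) + 1) * c i), k + 1, le_rfl,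
    Fin.cons (segment ℝ (fun i => (a i : ℝ)) (fun i => ((a + c) i : ℝ)))
      (fun _ => segment ℝ (fun i => ((0 : Fin n → ℤ) i : ℝ)) (fun i => (c i : ℝ))), ?_, ?_⟩
  · intro j
    refine Fin.cases ?_ (fun j => ?_) j
    · exact segPos a (a + c) (by simpa using hc)
    · exact segPos 0 c hc.symm
  · rw [Fin.sum_univ_succ]
    simp only [Fin.cons_zero, Fin.cons_succ, Finset.sum_const, Finset.card_univ, Fintype.card_fin]
    have := segSum (fun i => (a i : ℝ)) (fun i => (c i : ℝ)) k
    have e1 : (fun i => ((a + c) i : ℝ)) = (fun i => (a i : ℝ)) + (fun i => (c i : ℝ)) := by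
      funext i
      simp
    have e2 : (fun i => ((0 : Fin n → ℤ) i : ℝ)) = 0 := by
      funext i
      simp
    have e3 : (fun i => ((a i + ((k : ℤ) + 1) * c i : ℤ) : ℝ))
        = (fun i => (a i : ℝ)) + ((k : ℝ) + 1) • (fun i => (c i : ℝ)) := by
      funext i
      simp
    rw [e1, e2, e3]
    exact this.symm

theorem count {n : ℕ} (P : Set (Fin n → ℝ)) (hP : Convex ℝ P) (k : ℕ)
    (h : ¬ HasMinkowskiLength P (k + 1)) : (latticePoints P).ncard ≤ (k + 1) ^ n := by
  have key : (latticePoints P).ncard ≤ (Set.univ : Set (Fin n → ZMod (k + 1))).ncard := by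
    refine Set.ncard_le_ncard_of_injOn (fun x i => ((⌊x i⌋ : ℤ) : ZMod (k + 1)))
      (fun _ _ => Set.mem_univ _) ?_ Set.finite_univ
    rintro x ⟨hx, hx'⟩ y ⟨hy, hy'⟩ hxy
    choose a ha using hx'
    choose b hb using hy'
    obtain rfl : x = fun i => (a i : ℝ) := funext ha
    obtain rfl : y = fun i => (b i : ℝ) := funext hb
    by_contra hne
    have hd : ∀ i, ∃ c : ℤ, b i - a i = ((k : ℤ) + 1) * c := by
      intro i
      have := congrFun hxy i
      simp only [Int.floor_intCast] at this
      rw [ZMod.intCast_eq_intCast_iff_dvd_sub] at this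
      exact_mod_cast this
    choose c hc using hd
    have e : b = fun i => a i + ((k : ℤ) + 1) * c i := by
      funext i
      linarith [hc i]
    refine h (hasLen P hP k a c ?_ hx ?_)
    · rintro rfl
      apply hne
      rw [e]
      simp
    · rw [e] at hy
      exact hy
  simpa [Set.ncard_univ, Nat.card_eq_fintype_card, ZMod.card] using key

/-- If a tail of the full Minkowski lengths `L(P_i)` is bounded above by `q - 3`
(i.e. from some index on, no `P_i` satisfies `L(P_i) ≥ q - 2`), then the information
rates tend to zero. -/
theorem stmt18 (q : ℕ) (hq : IsPrimePow q) (hq3 : 3 ≤ q)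
    (n : ℕ → ℕ) (hn : Filter.Tendsto n Filter.atTop Filter.atTop)
    (P : ∀ i, Set (Fin (n i) → ℝ))
    (hpoly : ∀ i, IsIntegralPolytope (P i)) (hbox : ∀ i, InBox q (P i))
    (N : ℕ) (hL : ∀ i, N ≤ i → ¬ HasMinkowskiLength (P i) (q - 2)) :
    Filter.Tendsto
      (fun i => ((latticePoints (P i)).ncard : ℝ) / ((q : ℝ) - 1) ^ (n i))
      Filter.atTop (nhds 0) := by
  obtain ⟨k, rfl⟩ : ∃ k, q = k + 3 := ⟨q - 3, by omega⟩
  have hk : (0 : ℝ) ≤ (k : ℝ) := by positivity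
  have hlim : Filter.Tendsto (fun i => (((k : ℝ) + 1) / ((k : ℝ) + 2)) ^ (n i))
      Filter.atTop (nhds 0) :=
    (tendsto_pow_atTop_nhds_zero_of_lt_one (by positivity)
      (by rw [div_lt_one (by positivity)]; linarith)).comp hn
  have hq1 : ((k + 3 : ℕ) : ℝ) - 1 = (k : ℝ) + 2 := by
    push_cast
    ring
  rw [hq1]
  refine tendsto_of_tendsto_of_tendsto_of_le_of_le' tendsto_const_nhds hlim
    (Filter.Eventually.of_forall fun i => by positivity) ?_
  filter_upwards [Filter.eventually_ge_atTop N] with i hi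
  have hconv : Convex ℝ (P i) := by
    obtain ⟨V, -, hV⟩ := hpoly i
    rw [hV]
    exact convex_convexHull ℝ _
  have hc := count (P i) hconv k (hL i hi)
  rw [div_pow]
  gcongr
  exact_mod_cast hc
end
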